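/- arXiv:math/9811102 — 4 statements merged into one kernel-verified Lean document; each statement's English description precedes it below -/
import Mathlib

section
/- Let $C_n$ be a cyclic group of order $n$. Every virtual complex character of $C_n$ (i.e. $\mathbb{Z}$-linear combination of the irreducible complex characters) all of whose values lie in $\mathbb{Q}$ (equivalently in $\mathbb{Z}$) is a $\mathbb{Z}$-linear combination of the induced characters $\mathrm{Ind}^{C_n}_{H}\rho_0$ of the trivial character $\rho_0$, where $H$ runs through the subgroups of $C_n$; that is, $\langle \mathrm{Ind}^{C_n}_{H}\rho_0 \mid H\le C_n\rangle = R_{\mathbb{Q}}C_n$. -/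
/-! ### Virtual characters of abelian groups, permutation characters, and the quotient
`R_ℂ G / E_G` with its conjugation involution. -/

/-- The additive group of virtual complex characters of an abelian group `G`
(`ℤ`-linear combinations of the irreducible characters, which for an abelian group are
exactly the homomorphisms `G → ℂˣ`), as a subgroup of the functions `G → ℂ`. -/
noncomputable def RCa (G : Type*) [CommGroup G] : AddSubgroup (G → ℂ) :=
  AddSubgroup.closure {f | ∃ χ : G →* ℂˣ, f = fun g => (χ g : ℂ)}

/-- The permutation character of the action of `G` on `G ⧸ H`, i.e. the character of the
representation induced from the trivial character of `H`; its value at `g` is the number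
of fixed cosets. -/
noncomputable def permChar {G : Type*} [Group G] (H : Subgroup G) : G → ℂ :=
  fun g => (Nat.card {x : G ⧸ H // g • x = x} : ℂ)

/-- The subgroup of `G → ℂ` generated by the characters induced from the trivial
character of subgroups of `G`. -/
noncomputable def EG (G : Type*) [Group G] : AddSubgroup (G → ℂ) :=
  AddSubgroup.closure {f | ∃ H : Subgroup G, f = permChar H}

/-- The quotient `R_ℂ G / E_G` of the group of virtual characters. -/
abbrev RTilde (G : Type*) [CommGroup G] :=
  (RCa G) ⧸ ((EG G).addSubgroupOf (RCa G))

/-- Pointwise complex conjugation of functions `G → ℂ`, as an additive homomorphism. -/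
def conjFun (G : Type*) : (G → ℂ) →+ (G → ℂ) where
  toFun f := fun g => starRingEnd ℂ (f g)
  map_zero' := by funext g; simp
  map_add' f₁ f₂ := by funext g; simp

lemma conjFun_RCa_le (G : Type*) [CommGroup G] : (RCa G).map (conjFun G) ≤ RCa G := by
  rw [RCa, AddMonoidHom.map_closure, AddSubgroup.closure_le]
  rintro _ ⟨f, ⟨χ, rfl⟩, rfl⟩
  apply AddSubgroup.subset_closure
  refine ⟨(Units.map ((starRingEnd ℂ) : ℂ →* ℂ)).comp χ, ?_⟩
  funext g
  simp [conjFun]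

lemma conjFun_EG_le (G : Type*) [Group G] : (EG G).map (conjFun G) ≤ EG G := by
  rw [EG, AddMonoidHom.map_closure, AddSubgroup.closure_le]
  rintro _ ⟨f, ⟨H, rfl⟩, rfl⟩
  apply AddSubgroup.subset_closure
  refine ⟨H, ?_⟩
  funext g
  simp [conjFun, permChar]

/-- The involution of `R_ℂ G / E_G` induced by complex conjugation of characters. -/
noncomputable def conjQ (G : Type*) [CommGroup G] : RTilde G →+ RTilde G :=
  QuotientAddGroup.map _ _
    (((conjFun G).comp (RCa G).subtype).codRestrict (RCa G)
      (fun x => conjFun_RCa_le G (AddSubgroup.mem_map_of_mem _ x.2)))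
    (by
      intro x hx
      rw [AddSubgroup.mem_addSubgroupOf] at hx
      rw [AddSubgroup.mem_comap, AddSubgroup.mem_addSubgroupOf]
      exact conjFun_EG_le G (AddSubgroup.mem_map_of_mem _ hx))

/-- The subgroup `𝔸_G = {a ∈ R_ℂ G / E_G : a + ā = 0}`. -/
noncomputable def AG (G : Type*) [CommGroup G] : AddSubgroup (RTilde G) :=
  (AddMonoidHom.id (RTilde G) + conjQ G).ker

lemma mem_AG_iff {G : Type*} [CommGroup G] (a : RTilde G) :
    a ∈ AG G ↔ a + conjQ G a = 0 := Iff.rfl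

/-- The subgroup of functions `G → ℂ` all of whose values are rational. -/
noncomputable def ratValued (G : Type*) : AddSubgroup (G → ℂ) where
  carrier := {f | ∀ g, ∃ q : ℚ, f g = (q : ℂ)}
  zero_mem' := fun g => ⟨0, by simp⟩
  add_mem' := by
    rintro f₁ f₂ h₁ h₂ g
    obtain ⟨q₁, hq₁⟩ := h₁ g
    obtain ⟨q₂, hq₂⟩ := h₂ g
    exact ⟨q₁ + q₂, by simp [hq₁, hq₂]⟩
  neg_mem' := by
    rintro f h g
    obtain ⟨q, hq⟩ := h g
    exact ⟨-q, by simp [hq]⟩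

open Polynomial in
/-- Complex roots of unity generating the same group satisfy the same rational polynomials. -/
lemma aeval_eq_zero_of_zpowers_eq {ζ ξ : ℂˣ} (hζ : IsOfFinOrder ζ)
    (h : Subgroup.zpowers ζ = Subgroup.zpowers ξ) {P : ℚ[X]} (hP : aeval (ζ : ℂ) P = 0) :
    aeval (ξ : ℂ) P = 0 := by
  have hord : orderOf ζ = orderOf ξ := by
    rw [← Nat.card_zpowers, ← Nat.card_zpowers, h]
  have h1 : IsPrimitiveRoot (ζ : ℂ) (orderOf ζ) :=
    IsPrimitiveRoot.coe_units_iff.2 (IsPrimitiveRoot.orderOf ζ)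
  have h2 : IsPrimitiveRoot (ξ : ℂ) (orderOf ζ) :=
    hord ▸ IsPrimitiveRoot.coe_units_iff.2 (IsPrimitiveRoot.orderOf ξ)
  have hpos := hζ.orderOf_pos
  have hdvd := minpoly.dvd ℚ (ζ : ℂ) hP
  rw [← cyclotomic_eq_minpoly_rat h1 hpos, cyclotomic_eq_minpoly_rat h2 hpos] at hdvd
  exact aeval_eq_zero_of_dvd_aeval_eq_zero hdvd (minpoly.aeval ℚ (ξ : ℂ))

section FiniteAbelian

variable {G : Type*} [CommGroup G]

open Classical in
lemma permChar_apply (H : Subgroup G) (g : G) :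
    permChar H g = if g ∈ H then (Nat.card (G ⧸ H) : ℂ) else 0 := by
  have key (x : G ⧸ H) : g • x = x ↔ g ∈ H := by
    induction x using QuotientGroup.induction_on with
    | H x =>
      rw [MulAction.Quotient.smul_coe, smul_eq_mul, QuotientGroup.eq_iff_div_mem,
        mul_div_cancel_right]
  unfold permChar
  split_ifs with h <;> simp [key, h]

lemma EG_le_ratValued : EG G ≤ ratValued G := by
  rw [EG, AddSubgroup.closure_le]
  rintro _ ⟨H, rfl⟩ g
  exact ⟨(Nat.card {x : G ⧸ H // g • x = x} : ℚ), by simp [permChar]⟩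

lemma exists_eq_sum_of_mem_RCa [Fintype (G →* ℂˣ)] {f : G → ℂ} (hf : f ∈ RCa G) :
    ∃ a : (G →* ℂˣ) → ℤ, f = ∑ χ, a χ • fun g => (χ g : ℂ) := by
  classical
  induction hf using AddSubgroup.closure_induction with
  | mem f hf =>
    obtain ⟨χ, rfl⟩ := hf
    exact ⟨Pi.single χ 1, by simp [Pi.single_apply, ite_smul]⟩
  | zero => exact ⟨0, by simp⟩
  | add f₁ f₂ _ _ h₁ h₂ =>
    obtain ⟨a, rfl⟩ := h₁
    obtain ⟨b, rfl⟩ := h₂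
    exact ⟨a + b, by simp [add_smul, Finset.sum_add_distrib]⟩
  | neg f _ h =>
    obtain ⟨a, rfl⟩ := h
    exact ⟨-a, by simp⟩

open Classical in
lemma sum_apply_mul_inv_apply [Fintype G] (χ ψ : G →* ℂˣ) :
    ∑ g, (χ g : ℂ) * (ψ g⁻¹ : ℂˣ) = if χ = ψ then (Fintype.card G : ℂ) else 0 := by
  have h := sum_hom_units ((Units.coeHom ℂ).comp (χ * ψ⁻¹))
  have h1 : (Units.coeHom ℂ).comp (χ * ψ⁻¹) = 1 ↔ χ = ψ := by
    rw [← mul_inv_eq_one (a := χ)]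
    constructor
    · intro h
      ext g
      simpa using DFunLike.congr_fun h g
    · intro h
      rw [h]
      ext
      simp
  rw [if_congr h1 rfl rfl] at h
  push_cast at h
  rw [← h]
  simp

variable [Finite G]

/-- The values of a character of a finite abelian group are the powers of one of them. -/
lemma exists_zpowers_apply_eq_range (χ : G →* ℂˣ) :
    ∃ g, Subgroup.zpowers (χ g) = χ.range := by
  have : Finite χ.range := Set.finite_range χ
  obtain ⟨⟨_, g, rfl⟩, hg⟩ := IsCyclic.exists_generator (α := χ.range)
  refine ⟨g, le_antisymm (by simp) fun y hy => ?_⟩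
  obtain ⟨k, hk⟩ := hg ⟨y, hy⟩
  exact ⟨k, by simpa using congrArg Subtype.val hk⟩

lemma card_range_eq_orderOf (χ : G →* ℂˣ) : Nat.card χ.range = orderOf χ := by
  obtain ⟨g, hg⟩ := exists_zpowers_apply_eq_range χ
  apply Nat.dvd_antisymm
  · rw [← hg, Nat.card_zpowers]
    apply orderOf_dvd_of_pow_eq_one
    rw [← MonoidHom.pow_apply, pow_orderOf_eq_one, MonoidHom.one_apply]
  · apply orderOf_dvd_of_pow_eq_one
    ext x
    have := pow_card_eq_one' (x := (⟨χ x, x, rfl⟩ : χ.range))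
    simpa using congrArg (fun y : χ.range => ((y : ℂˣ) : ℂ)) this

open Classical in
/-- The sum of the powers of a character is the permutation character of its kernel. -/
lemma sum_zpowers_eq_permChar [Fintype (G →* ℂˣ)] (χ : G →* ℂˣ) :
    ∑ ψ with ψ ∈ Subgroup.zpowers χ, (fun g => (ψ g : ℂ)) = permChar χ.ker := by
  funext g
  rw [Finset.sum_apply, permChar_apply]
  let ev : Subgroup.zpowers χ →* ℂ :=
    { toFun := fun ψ => ((ψ : G →* ℂˣ) g : ℂ)
      map_one' := by simp
      map_mul' := by simp }
  have hev : ev = 1 ↔ g ∈ χ.ker := by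
    rw [MonoidHom.mem_ker]
    constructor
    · intro h
      simpa [ev] using DFunLike.congr_fun h ⟨χ, Subgroup.mem_zpowers χ⟩
    · intro h
      ext ⟨_, k, rfl⟩
      simp [ev, h]
  have hcard : Nat.card (G ⧸ χ.ker) = Fintype.card (Subgroup.zpowers χ) := by
    rw [Nat.card_congr (QuotientGroup.quotientKerEquivRange χ).toEquiv, card_range_eq_orderOf,
      Fintype.card_zpowers]
  rw [hcard]
  trans ∑ ψ, ev ψ
  · exact Finset.sum_bij (fun ψ hψ => ⟨ψ, (Finset.mem_filter.1 hψ).2⟩) (by simp) (by simp)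
      (by simp) (by simp [ev])
  · simp [sum_hom_units ev, hev]

lemma EG_le_RCa : EG G ≤ RCa G := by
  classical
  rw [EG, AddSubgroup.closure_le]
  rintro _ ⟨H, rfl⟩
  have := Fintype.ofFinite (G ⧸ H →* ℂˣ)
  have hsum : permChar H = ∑ ψ : G ⧸ H →* ℂˣ, fun g : G => (ψ g : ℂ) := by
    funext g
    rw [Finset.sum_apply, permChar_apply]
    let ev : (G ⧸ H →* ℂˣ) →* ℂ :=
      { toFun := fun ψ => (ψ g : ℂ)
        map_one' := by simp
        map_mul' := by simp }
    have hev : ev = 1 ↔ g ∈ H := by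
      rw [← QuotientGroup.eq_one_iff, ← CommGroup.forall_apply_eq_apply_iff (G ⧸ H) (M := ℂ)]
      simp [ev, MonoidHom.ext_iff]
    rw [if_congr hev.symm rfl rfl, ← CommGroup.card_monoidHom_of_hasEnoughRootsOfUnity (G ⧸ H) ℂ,
      Nat.card_eq_fintype_card]
    have := sum_hom_units ev
    push_cast at this
    exact this.symm
  rw [hsum]
  exact sum_mem fun ψ _ => AddSubgroup.subset_closure ⟨ψ.comp (QuotientGroup.mk' H), rfl⟩

/-- The multiplicities in a rational-valued virtual character are invariant under the action
of the Galois group. -/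
lemma coeff_eq_of_zpowers_eq [Fintype (G →* ℂˣ)] {a : (G →* ℂˣ) → ℤ}
    (hf : (∑ χ, a χ • fun g => (χ g : ℂ)) ∈ ratValued G) {χ ψ : G →* ℂˣ}
    (h : Subgroup.zpowers χ = Subgroup.zpowers ψ) : a χ = a ψ := by
  classical
  have := Fintype.ofFinite G
  set f : G → ℂ := ∑ χ, a χ • fun g => (χ g : ℂ) with hfdef
  have hcoeff (φ : G →* ℂˣ) : ∑ g, f g * (φ g⁻¹ : ℂˣ) = a φ * Fintype.card G := by
    simp only [hfdef, Finset.sum_apply, Pi.smul_apply, Finset.sum_mul]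
    rw [Finset.sum_comm]
    simp only [zsmul_eq_mul, mul_assoc, ← Finset.mul_sum, sum_apply_mul_inv_apply]
    simp
  choose q hq using hf
  obtain ⟨g₀, hg₀⟩ := exists_zpowers_apply_eq_range χ
  have hfin (g : G) : IsOfFinOrder (χ g) :=
    χ.isOfFinOrder (isOfFinOrder_of_finite g)
  obtain ⟨k, hk⟩ : ψ ∈ Subgroup.zpowers χ := h ▸ Subgroup.mem_zpowers ψ
  obtain ⟨l, hl⟩ : χ ∈ Subgroup.zpowers ψ := h.symm ▸ Subgroup.mem_zpowers χ
  have hkg (g : G) : χ g ^ k = ψ g := DFunLike.congr_fun hk g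
  have hlg (g : G) : ψ g ^ l = χ g := DFunLike.congr_fun hl g
  have hz : Subgroup.zpowers (χ g₀) = Subgroup.zpowers (ψ g₀) :=
    le_antisymm (by simpa using ⟨l, hlg g₀⟩) (by simpa using ⟨k, hkg g₀⟩)
  have hpow (g : G) : ∃ e : ℕ, χ g₀ ^ e = χ g := by
    have : χ g ∈ Subgroup.zpowers (χ g₀) := hg₀ ▸ ⟨g, rfl⟩
    rwa [← (hfin g₀).mem_powers_iff_mem_zpowers] at this
  choose e he using hpow
  have he' (g : G) : ψ g₀ ^ e g = ψ g := by
    rw [← hkg, ← hkg, ← he g, ← zpow_natCast, ← zpow_natCast, zpow_comm]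
  let P : Polynomial ℚ := ∑ g, Polynomial.C (q g) * Polynomial.X ^ e g⁻¹
    - Polynomial.C ((a χ : ℚ) * Fintype.card G)
  have hP (φ : G →* ℂˣ) (hφ : ∀ g, φ g₀ ^ e g = φ g) :
      Polynomial.aeval (φ g₀ : ℂ) P = a φ * Fintype.card G - a χ * Fintype.card G := by
    rw [← hcoeff φ]
    simp only [P, map_sub, map_sum, map_mul, map_pow, Polynomial.aeval_C, Polynomial.aeval_X,
      ← Units.val_pow_eq_pow_val, hφ, hq]
    simp
  have h0 := aeval_eq_zero_of_zpowers_eq (hfin g₀) hz (P := P) (by rw [hP χ he, sub_self])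
  rw [hP ψ he', ← sub_mul, mul_eq_zero_iff_right (by simp), sub_eq_zero] at h0
  exact_mod_cast h0.symm

open Classical in
lemma sum_generators_mem_EG [Fintype (G →* ℂˣ)] (K : Subgroup (G →* ℂˣ)) :
    ∑ ψ with Subgroup.zpowers ψ = K, (fun g => (ψ g : ℂ)) ∈ EG G := by
  have := Fintype.ofFinite (Subgroup (G →* ℂˣ))
  induction K using WellFoundedLT.induction with
  | ind K ih =>
    by_cases hK : ∃ χ, Subgroup.zpowers χ = K
    · obtain ⟨χ, rfl⟩ := hK
      have hfib := Finset.sum_fiberwise_of_maps_to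
        (s := {ψ | ψ ∈ Subgroup.zpowers χ}) (t := {L | L ≤ Subgroup.zpowers χ})
        (g := fun ψ : G →* ℂˣ => Subgroup.zpowers ψ) (by simp)
        (fun ψ : G →* ℂˣ => fun g => (ψ g : ℂ))
      have hinner (L : Subgroup (G →* ℂˣ)) (hL : L ≤ Subgroup.zpowers χ) :
          Finset.filter (fun ψ => Subgroup.zpowers ψ = L)
            (Finset.filter (fun ψ : G →* ℂˣ => ψ ∈ Subgroup.zpowers χ) Finset.univ)
            = Finset.filter (fun ψ => Subgroup.zpowers ψ = L) Finset.univ := by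
        ext ψ
        simp only [Finset.mem_filter, Finset.mem_univ, true_and, and_iff_right_iff_imp]
        rintro rfl
        exact hL (Subgroup.mem_zpowers ψ)
      rw [Finset.sum_congr rfl fun L hL => by rw [hinner L (by simpa using hL)],
        sum_zpowers_eq_permChar,
        ← Finset.add_sum_erase _ _ (a := Subgroup.zpowers χ) (by simp)] at hfib
      rw [eq_sub_of_add_eq hfib]
      refine sub_mem (AddSubgroup.subset_closure ⟨_, rfl⟩) (sum_mem fun L hL => ih L ?_)
      simp only [Finset.mem_erase, Finset.mem_filter, Finset.mem_univ, true_and] at hL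
      exact lt_of_le_of_ne hL.2 hL.1
    · push Not at hK
      simp [hK]

/-- The rational-valued virtual characters of a finite abelian group are the integral
combinations of its permutation characters. -/
theorem EG_eq_RCa_inf_ratValued : EG G = RCa G ⊓ ratValued G := by
  classical
  refine le_antisymm (le_inf EG_le_RCa EG_le_ratValued) ?_
  rintro f ⟨hf, hrat⟩
  have := Fintype.ofFinite (G →* ℂˣ)
  have := Fintype.ofFinite (Subgroup (G →* ℂˣ))
  obtain ⟨a, rfl⟩ := exists_eq_sum_of_mem_RCa hf
  rw [← Finset.sum_fiberwise _ (fun ψ : G →* ℂˣ => Subgroup.zpowers ψ)]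
  refine sum_mem fun K _ => ?_
  by_cases hK : ∃ χ, Subgroup.zpowers χ = K
  · obtain ⟨χ, rfl⟩ := hK
    rw [Finset.sum_congr rfl fun ψ hψ => by
      rw [coeff_eq_of_zpowers_eq hrat (Finset.mem_filter.1 hψ).2], ← Finset.smul_sum]
    exact zsmul_mem (sum_generators_mem_EG _) _
  · push Not at hK
    simp [hK]

end FiniteAbelian


/-- For the cyclic group `C_n`, every virtual complex character with
rational (equivalently integral) values is a `ℤ`-linear combination of the characters
induced from the trivial character of subgroups; that is,
`⟨Ind^{C_n}_H ρ₀ ∣ H ≤ C_n⟩ = R_ℚ C_n`. -/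
theorem EG_cyclic_eq_rational_virtual_characters (n : ℕ) [NeZero n] :
    EG (Multiplicative (ZMod n))
      = RCa (Multiplicative (ZMod n)) ⊓ ratValued (Multiplicative (ZMod n)) := by
  exact EG_eq_RCa_inf_ratValued
end

section
/- Let $C_n=\langle x\rangle$ be cyclic of order $n$ and $C_l=\langle y\rangle\le C_n$ a subgroup of order $l$ (so $l\mid n$ and $y=x^{n/l}$). Then the square formed by $\theta$ and restriction commutes: for every $\alpha\in\mathbb{B}_{C_n}$ one has $\theta(\mathbb{B}res^{C_n}_{C_l}(\alpha))=\widetilde{Res}^{C_n}_{C_l}(\theta(\alpha))$ in $\widetilde{R_{\mathbb{C}}C_l}$. -/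
open Finsupp

/-- The natural map from conjugacy classes of `G` to the abelianization of `G`. -/
def conjToAb {G : Type*} [Group G] : ConjClasses G → Abelianization G :=
  Quotient.lift Abelianization.of (fun a b (h : IsConj a b) => by
    obtain ⟨c, hc⟩ := h
    have : Abelianization.of (c * a) = Abelianization.of (b * c) := by
      rw [hc.eq]
    simpa [map_mul, mul_comm] using this)

@[simp] lemma conjToAb_mk {G : Type*} [Group G] (a : G) :
    conjToAb (ConjClasses.mk a) = Abelianization.of a := rfl

/-- The degree map sending a formal `ℤ`-combination of conjugacy classes to the corresponding
product in the abelianization. -/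
noncomputable def degMap (G : Type*) [Group G] :
    (ConjClasses G →₀ ℤ) →+ Additive (Abelianization G) :=
  Finsupp.liftAddHom (fun c => (zmultiplesHom _) (Additive.ofMul (conjToAb c)))

@[simp] lemma degMap_single {G : Type*} [Group G] (a : G) (k : ℤ) :
    degMap G (Finsupp.single (ConjClasses.mk a) k)
      = k • (Additive.ofMul (Abelianization.of a)) := by
  simp [degMap]

/-- `lambdaKer G` consists of the formal `ℤ`-combinations of conjugacy classes whose product
lies in the commutator subgroup; these are the (differences of) singular orbit data. -/
noncomputable def lambdaKer (G : Type*) [Group G] : AddSubgroup (ConjClasses G →₀ ℤ) :=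
  (degMap G).ker

/-- The subgroup of relations: the class of the identity, and the cancelling pairs
`[γ̂, γ̂⁻¹]`. -/
noncomputable def bRel (G : Type*) [Group G] : AddSubgroup (ConjClasses G →₀ ℤ) :=
  AddSubgroup.closure
    (insert (Finsupp.single (ConjClasses.mk (1 : G)) 1)
      {x | ∃ γ : G, x = Finsupp.single (ConjClasses.mk γ) 1
        + Finsupp.single (ConjClasses.mk γ⁻¹) 1})

/-- The group of singular orbit data `𝔹_G`. -/
abbrev BG (G : Type*) [Group G] :=
  (lambdaKer G) ⧸ ((bRel G).addSubgroupOf (lambdaKer G))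

/-- The formal sum of conjugacy classes corresponding to a finite (multi)set of group
elements, presented as a list. -/
noncomputable def bdatum (G : Type*) [Group G] (l : List G) : ConjClasses G →₀ ℤ :=
  (l.map (fun γ => Finsupp.single (ConjClasses.mk γ) (1 : ℤ))).sum

lemma degMap_bdatum {G : Type*} [Group G] (l : List G) :
    degMap G (bdatum G l) = Additive.ofMul (Abelianization.of l.prod) := by
  induction l with
  | nil => simp [bdatum]
  | cons a t ih =>
      have : bdatum G (a :: t) = Finsupp.single (ConjClasses.mk a) 1 + bdatum G t := by
        simp [bdatum]
      rw [this, map_add, ih, degMap_single]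
      simp [← ofMul_mul]

lemma bdatum_mem_lambdaKer {G : Type*} [Group G] (l : List G)
    (h : l.prod ∈ commutator G) : bdatum G l ∈ lambdaKer G := by
  have : Abelianization.of l.prod = 1 := (QuotientGroup.eq_one_iff _).2 h
  simp [lambdaKer, AddMonoidHom.mem_ker, degMap_bdatum, this]

lemma bdatum_mem_lambdaKer_of_prod_eq_one {G : Type*} [Group G] (l : List G)
    (h : l.prod = 1) : bdatum G l ∈ lambdaKer G :=
  bdatum_mem_lambdaKer l (by simp [h, Subgroup.one_mem])

/-- The element of `𝔹_G` determined by a list of group elements whose product lies in the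
commutator subgroup. -/
noncomputable def bmk {G : Type*} [Group G] (l : List G) (h : bdatum G l ∈ lambdaKer G) :
    BG G :=
  QuotientAddGroup.mk (⟨bdatum G l, h⟩ : lambdaKer G)

/-! ### The homomorphism `θ` for cyclic groups. -/

/-- The cyclic group of order `n`, written multiplicatively. -/
abbrev Cyc (n : ℕ) := Multiplicative (ZMod n)

/-- The irreducible character `ρ_j` of the cyclic group `C_n`,
`ρ_j(x^v) = e^{2πi j v / n}`. -/
noncomputable def rho (n : ℕ) (j : ℕ) : Cyc n → ℂ :=
  fun g => Complex.exp (2 * (Real.pi : ℂ) * Complex.I * j * ((Multiplicative.toAdd g).val : ℂ) / n)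

/-- For `i, j`, with `k = gcd(n, i)` and `i = l k`, the unique integer `r` with
`1 ≤ r ≤ n/k` and `r ≡ j l (mod n/k)`. -/
def rVal (n i j : ℕ) : ℕ :=
  if (j * (i / n.gcd i)) % (n / n.gcd i) = 0 then n / n.gcd i
  else (j * (i / n.gcd i)) % (n / n.gcd i)

/-- The virtual character `∑_{j=1}^{n-1} (q - (1/n) ∑_s k_s r_{sj}) ρ_j` associated to the
singular orbit data given by the list `L = [x^{i_1}, …, x^{i_q}]`. -/
noncomputable def thetaFun (n : ℕ) (L : List (Cyc n)) : Cyc n → ℂ :=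
  ∑ j ∈ Finset.Ico 1 n,
    ((L.length : ℂ)
        - (L.map (fun γ => ((n.gcd (Multiplicative.toAdd γ).val
            * rVal n (Multiplicative.toAdd γ).val j : ℕ) : ℂ))).sum / n)
      • rho n j

/-- `θ : 𝔹_{C_n} → R_ℂ C_n / D_{C_n}` is the homomorphism sending the class of a
singular orbit datum `[x^{i_1}, …, x^{i_q}]` to the class of the virtual character
`∑_{j=1}^{n-1} (q - (1/n) ∑_s k_s r_{sj}) ρ_j`. -/
def IsTheta {n : ℕ} (θ : BG (Cyc n) →+ RTilde (Cyc n)) : Prop :=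
  ∀ (L : List (Cyc n)) (hL : bdatum (Cyc n) L ∈ lambdaKer (Cyc n)) (r : RCa (Cyc n)),
    (r : Cyc n → ℂ) = thetaFun n L →
      θ (bmk L hL) = QuotientAddGroup.mk r

/-- The inclusion `C_l → C_n` (for `l ∣ n`) sending the generator `y` of `C_l` to
`x^(n/l)`. -/
noncomputable def cycIncl (n l : ℕ) (hl : l ∣ n) : Cyc l →* Cyc n :=
  AddMonoidHom.toMultiplicative
    (ZMod.lift l ⟨(zmultiplesHom (ZMod n)) ((n / l : ℕ) : ZMod n), by
      simp only [zmultiplesHom_apply]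
      rw [zsmul_eq_mul]
      push_cast
      rw [← Nat.cast_mul, Nat.mul_div_cancel' hl, ZMod.natCast_self]⟩)

/-- The minimal exponent `m ≥ 1` such that `γ^m` lies in the subgroup `C_l ≤ C_n`. -/
noncomputable def resExp (n l : ℕ) (hl : l ∣ n) (γ : Cyc n) : ℕ :=
  sInf {m : ℕ | 1 ≤ m ∧ γ ^ m ∈ (cycIncl n l hl).range}

/-- The restriction to `C_l` of the singular orbit of `γ` in `C_n`: it consists of
`i = (n/l)/n_γ` orbits with stabilizer generated by the element of `C_l` mapping to
`γ^{n_γ}`, where `n_γ = min {m ≥ 1 : γ^m ∈ C_l}`. -/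
noncomputable def bresSingle (n l : ℕ) (hl : l ∣ n) (γ : Cyc n) :
    ConjClasses (Cyc l) →₀ ℤ :=
  Finsupp.single
    (ConjClasses.mk (Multiplicative.ofAdd
      (((Multiplicative.toAdd (γ ^ resExp n l hl γ)).val / (n / l) : ℕ) : ZMod l)))
    (((n / l) / resExp n l hl γ : ℕ) : ℤ)

/-- `res` is the restriction homomorphism `𝔹res^{C_n}_{C_l} : 𝔹_{C_n} → 𝔹_{C_l}`. -/
def IsBresCyc (n l : ℕ) (hl : l ∣ n) (res : BG (Cyc n) →+ BG (Cyc l)) : Prop :=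
  ∀ (L : List (Cyc n)) (hL : bdatum (Cyc n) L ∈ lambdaKer (Cyc n))
    (m : lambdaKer (Cyc l)),
    (m : ConjClasses (Cyc l) →₀ ℤ) = (L.map (fun γ => bresSingle n l hl γ)).sum →
      res (bmk L hL) = QuotientAddGroup.mk m

/-- `R` is the homomorphism `R_ℂ C_n / D_{C_n} → R_ℂ C_l / D_{C_l}` induced by
restriction of characters along the inclusion `C_l → C_n`. -/
def IsResQ (n l : ℕ) (hl : l ∣ n) (R : RTilde (Cyc n) →+ RTilde (Cyc l)) : Prop :=
  ∀ (r : RCa (Cyc n)) (r' : RCa (Cyc l)),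
    (r' : Cyc l → ℂ) = (fun y => (r : Cyc n → ℂ) (cycIncl n l hl y)) →
      R (QuotientAddGroup.mk r) = QuotientAddGroup.mk r'

lemma sub_gcd_mul_rVal (n i j : ℕ) [NeZero n] :
    (n : ℤ) - (n.gcd i * rVal n i j : ℕ) = (-((i : ℤ) * j)) % n := by
  have hn : 0 < n := Nat.pos_of_neZero n
  have hk : 0 < n.gcd i := Nat.gcd_pos_of_pos_left i hn
  obtain ⟨n', hn'⟩ := Nat.gcd_dvd_left n i
  obtain ⟨i', hi'⟩ := Nat.gcd_dvd_right n i
  unfold rVal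
  generalize n.gcd i = k at *
  subst hn' hi'
  rw [Nat.mul_div_cancel_left _ hk, Nat.mul_div_cancel_left _ hk]
  have hn0 : 0 < n' := Nat.pos_of_mul_pos_left hn
  have key : (-(((k * i' : ℕ) : ℤ) * j)) % ((k * n' : ℕ) : ℤ) = k * ((-((j * i' : ℕ) : ℤ)) % n') := by
    push_cast
    rw [← Int.mul_emod_mul_of_pos _ _ (by exact_mod_cast hk)]
    ring_nf
  rw [key]
  split_ifs with h
  · rw [Int.emod_eq_zero_of_dvd]
    · simp
    · rw [dvd_neg]
      exact_mod_cast Nat.dvd_of_mod_eq_zero h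
  · generalize j * i' = a at *
    have : (-(a : ℤ)) % n' = n' - ((a % n' : ℕ) : ℤ) := by
      have h1 := Nat.mod_lt a hn0
      have h2 := Nat.div_add_mod a n'
      rw [Int.emod_eq_iff (by omega)]
      refine ⟨by omega, by rw [Int.natAbs_natCast]; omega, ⟨1 + ((a / n' : ℕ) : ℤ), ?_⟩⟩
      zify at h2 ⊢
      linear_combination -h2
    rw [this]
    push_cast
    ring

lemma sum_range_mul_eq {A : Type*} [AddCommMonoid A] (f : ℕ → A) (l N : ℕ) :
    ∑ j ∈ Finset.range (l * N), f j
      = ∑ j ∈ Finset.range l, ∑ t ∈ Finset.range N, f (j + l * t) := by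
  rw [Finset.sum_comm]
  induction N with
  | zero => simp
  | succ N ih =>
    rw [Nat.mul_succ, Finset.sum_range_add, ih, Finset.sum_range_succ]
    simp only [add_comm]

lemma sum_zmod_eq_sum_range {A : Type*} [AddCommMonoid A] (n : ℕ) [NeZero n] (f : ZMod n → A) :
    ∑ x, f x = ∑ j ∈ Finset.range n, f (j : ZMod n) := by
  refine Finset.sum_nbij' ZMod.val (fun j => (j : ZMod n)) ?_ ?_ ?_ ?_ ?_
  · simp [ZMod.val_lt]
  · simp
  · simp
  · intro j hj
    exact ZMod.val_cast_of_lt (Finset.mem_range.1 hj)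
  · simp

lemma two_mul_sum_range_emod (M : ℕ) [NeZero M] (a b : ℤ) (ha : IsCoprime a M) :
    2 * ∑ t ∈ Finset.range M, (b - t * a) % (M : ℤ) = M * (M - 1) := by
  have hu : IsUnit (a : ZMod M) := (ZMod.coe_int_isUnit_iff_isCoprime a M).2 ha.symm
  obtain ⟨u, hu⟩ := hu
  have h1 : ∑ t ∈ Finset.range M, (b - t * a) % (M : ℤ)
      = ∑ x : ZMod M, (((b : ZMod M) - x * u).val : ℤ) := by
    rw [sum_zmod_eq_sum_range]
    refine Finset.sum_congr rfl fun t _ => ?_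
    rw [hu, ← ZMod.val_intCast]
    push_cast
    rfl
  have h2 : ∑ x : ZMod M, (((b : ZMod M) - x * u).val : ℤ) = ∑ x : ZMod M, (x.val : ℤ) :=
    Equiv.sum_comp ((Units.mulRight u).trans (Equiv.subLeft (b : ZMod M)))
      (fun x : ZMod M => (x.val : ℤ))
  have h3 : ∑ x : ZMod M, (x.val : ℤ) = ∑ j ∈ Finset.range M, (j : ℤ) := by
    rw [sum_zmod_eq_sum_range]
    refine Finset.sum_congr rfl fun j hj => ?_
    rw [ZMod.val_cast_of_lt (Finset.mem_range.1 hj)]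
  have h4 := Finset.sum_range_id_mul_two M
  zify [NeZero.one_le (n := M)] at h4
  rw [h1, h2, h3, mul_comm]
  exact h4

lemma int_emod_mul_eq (x : ℤ) {l M : ℕ} (hl : 0 < l) (hM : 0 < M) :
    x % (l * M : ℤ) = x % l + l * ((x / l) % M) := by
  have h1 := Int.emod_nonneg x (b := l) (by omega)
  have h2 := Int.emod_lt_of_pos x (b := l) (by omega)
  have h3 := Int.emod_nonneg (x / l) (b := M) (by omega)
  have h4 := Int.emod_lt_of_pos (x / l) (b := M) (by omega)
  have h5 := Int.mul_ediv_add_emod x l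
  have h6 := Int.mul_ediv_add_emod (x / l) M
  have hlM : (0 : ℤ) < l * M := by positivity
  rw [Int.emod_eq_iff hlM.ne']
  refine ⟨by positivity, ?_, ⟨-(x / l / M), by linear_combination h5 + l * h6⟩⟩
  rw [Int.natAbs_of_nonneg hlM.le]
  nlinarith

lemma two_mul_sum_range_neg_mul_emod (l M d i j : ℕ) (hl : 0 < l) (hM : 0 < M) (hd : 0 < d)
    (hco : i.Coprime M) :
    2 * ∑ t ∈ Finset.range (M * d),
        (-(((d * i : ℕ) : ℤ) * (j + l * t : ℕ))) % ((l * (M * d) : ℕ) : ℤ)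
      = (M * d : ℕ) * (2 * (d * ((-((i : ℤ) * j)) % l)) + l * ((M * d : ℕ) - d)) := by
  have : NeZero M := ⟨hM.ne'⟩
  have hterm : ∀ t : ℕ, (-(((d * i : ℕ) : ℤ) * (j + l * t : ℕ))) % ((l * (M * d) : ℕ) : ℤ)
      = d * ((-((i : ℤ) * j)) % l) + d * l * (((-((i : ℤ) * j)) / l - t * i) % M) := by
    intro t
    have h : (-((i : ℤ) * j) + l * (-(t * i))) / l = -((i : ℤ) * j) / l - t * i := by
      rw [Int.add_mul_ediv_left _ _ (by omega)]
      ring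
    have h' : (-((i : ℤ) * j) + l * (-(t * i))) % l = -((i : ℤ) * j) % l := by simp
    rw [mul_assoc, ← mul_add, ← h', ← h, ← int_emod_mul_eq _ hl hM,
      ← Int.mul_emod_mul_of_pos _ _ (by exact_mod_cast hd)]
    push_cast
    ring_nf
  have hper : ∀ k : ℕ, 2 * ∑ t ∈ Finset.range M,
      ((-((i : ℤ) * j)) / l - (t + M * k : ℕ) * i) % (M : ℤ) = M * (M - 1) := by
    intro k
    rw [← two_mul_sum_range_emod M i ((-((i : ℤ) * j)) / l - M * k * i)
      (Nat.isCoprime_iff_coprime.2 hco)]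
    refine congrArg _ (Finset.sum_congr rfl fun t _ => congrArg (· % _) ?_)
    push_cast
    ring
  have hsum : 2 * ∑ t ∈ Finset.range (M * d), ((-((i : ℤ) * j)) / l - t * i) % (M : ℤ)
      = d * (M * (M - 1)) := by
    rw [sum_range_mul_eq (fun t : ℕ => ((-((i : ℤ) * j)) / l - t * i) % (M : ℤ)), Finset.sum_comm,
      Finset.mul_sum, Finset.sum_congr rfl fun k _ => hper k]
    simp
  rw [Finset.sum_congr rfl fun t _ => hterm t, Finset.sum_add_distrib, Finset.sum_const,
    Finset.card_range, nsmul_eq_mul, ← Finset.mul_sum]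
  push_cast
  linear_combination d * l * hsum

lemma bRel_le_lambdaKer (G : Type*) [Group G] : bRel G ≤ lambdaKer G := by
  rw [bRel, AddSubgroup.closure_le]
  rintro _ (rfl | ⟨γ, rfl⟩)
  · simp [lambdaKer, AddMonoidHom.mem_ker]
  · simp [lambdaKer, AddMonoidHom.mem_ker]

lemma exists_bdatum_sub_mem_bRel {G : Type*} [Group G] (f : ConjClasses G →₀ ℤ) :
    ∃ L : List G, bdatum G L - f ∈ bRel G := by
  induction f using Finsupp.induction_linear with
  | zero => exact ⟨[], by simp [bdatum]⟩
  | add f g hf hg =>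
    obtain ⟨L, hL⟩ := hf
    obtain ⟨L', hL'⟩ := hg
    refine ⟨L ++ L', ?_⟩
    have : bdatum G (L ++ L') - (f + g) = (bdatum G L - f) + (bdatum G L' - g) := by
      simp only [bdatum, List.map_append, List.sum_append]
      abel
    rw [this]
    exact add_mem hL hL'
  | single c k =>
    obtain ⟨γ, rfl⟩ := ConjClasses.mk_surjective c
    obtain ⟨m, rfl | rfl⟩ := k.eq_nat_or_neg
    · exact ⟨List.replicate m γ, by simp [bdatum]⟩
    · refine ⟨List.replicate m γ⁻¹, ?_⟩
      have : bdatum G (List.replicate m γ⁻¹) - single (ConjClasses.mk γ) (-(m : ℤ))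
          = m • (single (ConjClasses.mk γ) 1 + single (ConjClasses.mk γ⁻¹) 1) := by
        simp [bdatum, add_comm]
      rw [this]
      refine nsmul_mem ?_ m
      exact AddSubgroup.subset_closure (Set.mem_insert_of_mem _ ⟨γ, rfl⟩)

lemma exists_eq_bmk {G : Type*} [Group G] (α : BG G) : ∃ L hL, α = bmk (G := G) L hL := by
  obtain ⟨f, rfl⟩ := QuotientAddGroup.mk_surjective α
  obtain ⟨L, hL⟩ := exists_bdatum_sub_mem_bRel (f : ConjClasses G →₀ ℤ)
  have hmem : bdatum G L ∈ lambdaKer G := by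
    simpa using add_mem (bRel_le_lambdaKer G hL) f.2
  refine ⟨L, hmem, QuotientAddGroup.eq.2 ?_⟩
  rw [AddSubgroup.mem_addSubgroupOf]
  simpa [neg_add_eq_sub] using hL

lemma bdatum_mem_lambdaKer_iff_prod_eq_one {G : Type*} [CommGroup G] (L : List G) :
    bdatum G L ∈ lambdaKer G ↔ L.prod = 1 := by
  rw [lambdaKer, AddMonoidHom.mem_ker, degMap_bdatum, ofMul_eq_zero]
  exact map_eq_one_iff Abelianization.of Abelianization.equivOfComm.injective

lemma prod_eq_one_iff_dvd_sum_val {n : ℕ} [NeZero n] (L : List (Cyc n)) :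
    L.prod = 1 ↔ n ∣ (L.map fun γ => γ.toAdd.val).sum := by
  rw [← ZMod.natCast_eq_zero_iff, ← toAdd_eq_zero, toAdd_list_sum]
  simp [Function.comp_def]

lemma rho_eq_stdAddChar (n j : ℕ) [NeZero n] (g : Cyc n) :
    rho n j g = ZMod.stdAddChar ((j : ZMod n) * g.toAdd) := by
  have : (j : ZMod n) * g.toAdd = ((j * g.toAdd.val : ℤ) : ZMod n) := by simp
  rw [this, ZMod.stdAddChar_coe, rho]
  push_cast
  ring_nf

lemma rho_mem_RCa (n j : ℕ) [NeZero n] : rho n j ∈ RCa (Cyc n) := by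
  refine AddSubgroup.subset_closure ⟨MonoidHom.toHomUnits
    (AddChar.toMonoidHom ((ZMod.stdAddChar (N := n)).mulShift (j : ZMod n))), ?_⟩
  funext g
  simp [rho_eq_stdAddChar, AddChar.mulShift_apply]

lemma toAdd_cycIncl {n l : ℕ} [NeZero l] (hl : l ∣ n) (y : Cyc l) :
    (cycIncl n l hl y).toAdd = ((y.toAdd.val * (n / l) : ℕ) : ZMod n) := by
  have : y = Multiplicative.ofAdd (((y.toAdd.val : ℤ)) : ZMod l) := by simp
  conv_lhs => rw [this, cycIncl]
  rw [AddMonoidHom.toMultiplicative_apply_apply, toAdd_ofAdd, toAdd_ofAdd, ZMod.lift_coe]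
  simp

lemma rho_cycIncl {n l : ℕ} [NeZero n] [NeZero l] (hl : l ∣ n) (j : ℕ) (y : Cyc l) :
    rho n j (cycIncl n l hl y) = rho l j y := by
  have hn : n = l * (n / l) := (Nat.mul_div_cancel' hl).symm
  have hl0 : (l : ℂ) ≠ 0 := NeZero.ne _
  rw [rho_eq_stdAddChar, toAdd_cycIncl, ← Nat.cast_mul, ← Int.cast_natCast (R := ZMod n),
    ZMod.stdAddChar_coe, rho]
  have hN0 : ((n / l : ℕ) : ℂ) ≠ 0 := by
    rw [Nat.cast_ne_zero]
    rintro h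
    exact NeZero.ne n (by rw [hn, h, mul_zero])
  rw [show (n : ℂ) = l * (n / l : ℕ) by rw [← Nat.cast_mul, ← hn]]
  generalize n / l = N at *
  push_cast
  congr 1
  field_simp

lemma rho_add_mul (l j t : ℕ) [NeZero l] : rho l (j + l * t) = rho l j := by
  funext g
  simp [rho_eq_stdAddChar]

lemma permChar_bot (l : ℕ) [NeZero l] :
    permChar (⊥ : Subgroup (Cyc l)) = ∑ j ∈ Finset.range l, rho l j := by
  classical
  funext g
  have hsum : (∑ j ∈ Finset.range l, rho l j) g = if g.toAdd = 0 then (l : ℂ) else 0 := by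
    rw [Finset.sum_apply]
    simp_rw [rho_eq_stdAddChar]
    rw [← sum_zmod_eq_sum_range l fun x => ZMod.stdAddChar (x * g.toAdd),
      AddChar.sum_mulShift _ (ZMod.isPrimitive_stdAddChar l), ZMod.card]
    push_cast
    rfl
  rw [hsum, permChar]
  split_ifs with h
  · obtain rfl : g = 1 := h
    rw [Nat.card_congr (Equiv.subtypeUnivEquiv fun x => one_smul _ x),
      Nat.card_congr (QuotientGroup.quotientBot (G := Cyc l)).toEquiv]
    simp
  · rw [Nat.cast_eq_zero, Nat.card_eq_zero]
    refine Or.inl ⟨fun ⟨x, hx⟩ => h ?_⟩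
    induction x using QuotientGroup.induction_on with | H x => ?_
    have h1 : ((g * x : Cyc l) : Cyc l ⧸ (⊥ : Subgroup (Cyc l))) = x := hx
    rw [QuotientGroup.eq, Subgroup.mem_bot, inv_mul_eq_one, mul_eq_right] at h1
    exact congrArg Multiplicative.toAdd h1

lemma Nat.div_gcd_mul_eq_mul_div_gcd (N i : ℕ) : N / N.gcd i * i = N * (i / N.gcd i) := by
  rw [Nat.div_mul_right_comm (Nat.gcd_dvd_left _ _), Nat.mul_div_assoc _ (Nat.gcd_dvd_right _ _)]

lemma pow_mem_range_cycIncl_iff {n l : ℕ} [NeZero n] [NeZero l] (hl : l ∣ n) (γ : Cyc n) (m : ℕ) :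
    γ ^ m ∈ (cycIncl n l hl).range ↔ n / l ∣ m * γ.toAdd.val := by
  have hpow : (γ ^ m).toAdd = ((m * γ.toAdd.val : ℕ) : ZMod n) := by simp
  have hN : n / l ∣ n := Nat.div_dvd_of_dvd hl
  constructor
  · rintro ⟨y, hy⟩
    rw [← Multiplicative.toAdd.injective.eq_iff, hpow, toAdd_cycIncl,
      ZMod.natCast_eq_natCast_iff] at hy
    exact (hy.of_dvd hN).dvd_iff dvd_rfl |>.1 (Dvd.intro_left _ rfl)
  · rintro ⟨k, hk⟩
    refine ⟨Multiplicative.ofAdd (k : ZMod l), ?_⟩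
    rw [← Multiplicative.toAdd.injective.eq_iff, hpow, toAdd_cycIncl, hk,
      ZMod.natCast_eq_natCast_iff, toAdd_ofAdd,
      ZMod.val_natCast, mul_comm]
    have := (Nat.mod_modEq k l).mul_left' (n / l)
    rwa [Nat.div_mul_cancel hl] at this

lemma resExp_eq {n l : ℕ} [NeZero n] [NeZero l] (hl : l ∣ n) (γ : Cyc n) :
    resExp n l hl γ = n / l / (n / l).gcd γ.toAdd.val := by
  have hN : 0 < n / l := Nat.div_pos (Nat.le_of_dvd (Nat.pos_of_neZero n) hl) (Nat.pos_of_neZero l)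
  have hd : 0 < (n / l).gcd γ.toAdd.val := Nat.gcd_pos_of_pos_left _ hN
  refine IsLeast.csInf_eq ⟨⟨Nat.div_pos (Nat.gcd_le_left _ hN) hd, ?_⟩, ?_⟩
  · rw [pow_mem_range_cycIncl_iff, Nat.div_gcd_mul_eq_mul_div_gcd]
    exact Nat.dvd_mul_right _ _
  · rintro m ⟨hm, hmem⟩
    rw [pow_mem_range_cycIncl_iff] at hmem
    refine Nat.le_of_dvd hm ((Nat.coprime_div_gcd_div_gcd hd).dvd_of_dvd_mul_right ?_)
    rw [← Nat.mul_div_assoc _ (Nat.gcd_dvd_right _ _)]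
    exact Nat.div_dvd_div (Nat.gcd_dvd_left _ _) hmem

/-- The generator of the stabilizer of an orbit of the restriction of `γ` to `C_l`. -/
noncomputable def resElt (n l : ℕ) (γ : Cyc n) : Cyc l :=
  Multiplicative.ofAdd ((γ.toAdd.val / (n / l).gcd γ.toAdd.val : ℕ) : ZMod l)

lemma bresSingle_eq {n l : ℕ} [NeZero n] [NeZero l] (hl : l ∣ n) (γ : Cyc n) :
    bresSingle n l hl γ = single (ConjClasses.mk (resElt n l γ)) ((n / l).gcd γ.toAdd.val : ℤ) := by
  have hN : 0 < n / l := Nat.div_pos (Nat.le_of_dvd (Nat.pos_of_neZero n) hl) (Nat.pos_of_neZero l)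
  have hpow : ∀ m, (γ ^ m).toAdd = ((m * γ.toAdd.val : ℕ) : ZMod n) := by simp
  rw [bresSingle, resExp_eq, Nat.div_div_self (Nat.gcd_dvd_left _ _) hN.ne', resElt, hpow,
    ZMod.val_natCast, Nat.div_gcd_mul_eq_mul_div_gcd]
  have h := Nat.mul_mod_mul_left (n / l) (γ.toAdd.val / (n / l).gcd γ.toAdd.val) l
  rw [Nat.div_mul_cancel hl] at h
  rw [h, Nat.mul_div_cancel_left _ hN, ZMod.natCast_mod]

/-- The restriction to `C_l` of a list of elements of `C_n`, as a list. -/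
noncomputable def resList (n l : ℕ) (L : List (Cyc n)) : List (Cyc l) :=
  L.flatMap fun γ => List.replicate ((n / l).gcd γ.toAdd.val) (resElt n l γ)

lemma bdatum_resList {n l : ℕ} [NeZero n] [NeZero l] (hl : l ∣ n) (L : List (Cyc n)) :
    bdatum (Cyc l) (resList n l L) = (L.map fun γ => bresSingle n l hl γ).sum := by
  induction L with
  | nil => simp [bdatum, resList]
  | cons γ L ih =>
    rw [List.map_cons, List.sum_cons, ← ih, bresSingle_eq]
    simp [bdatum, resList]

lemma prod_resList_eq_one {n l : ℕ} [NeZero n] [NeZero l] (hl : l ∣ n) (L : List (Cyc n))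
    (hL : L.prod = 1) : (resList n l L).prod = 1 := by
  have h : (resList n l L).prod.toAdd = (((L.map fun γ => γ.toAdd.val).sum : ℕ) : ZMod l) := by
    clear hL
    induction L with
    | nil => simp [resList]
    | cons γ L ih =>
      rw [List.map_cons, List.sum_cons, Nat.cast_add, ← ih]
      simp only [resList, List.flatMap_cons, List.prod_append, List.prod_replicate, toAdd_mul,
        toAdd_pow]
      congr 1
      rw [resElt, toAdd_ofAdd, nsmul_eq_mul, ← Nat.cast_mul,
        Nat.mul_div_cancel' (Nat.gcd_dvd_right _ _)]
  rw [← toAdd_eq_zero, h, ZMod.natCast_eq_zero_iff]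
  exact hl.trans ((prod_eq_one_iff_dvd_sum_val L).1 hL)

/-- `n` times the coefficient of `ρ_j` in the virtual character `thetaFun n L`. -/
def thetaCoeff (n : ℕ) (L : List (Cyc n)) (j : ℕ) : ℤ :=
  (L.map fun γ => (-((γ.toAdd.val : ℤ) * j)) % n).sum

lemma thetaFun_eq (n : ℕ) [NeZero n] (L : List (Cyc n)) :
    thetaFun n L = ∑ j ∈ Finset.range n, ((thetaCoeff n L j : ℂ) / n) • rho n j := by
  have hn : (n : ℂ) ≠ 0 := NeZero.ne _
  have h0 : thetaCoeff n L 0 = 0 := by simp [thetaCoeff]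
  rw [Finset.range_eq_Ico, Finset.sum_eq_sum_Ico_succ_bot (Nat.pos_of_neZero n), h0]
  simp only [Int.cast_zero, zero_div, zero_smul, zero_add]
  refine Finset.sum_congr rfl fun j _ => congrArg (· • rho n j) ?_
  rw [eq_div_iff hn, sub_mul, div_mul_cancel₀ _ hn]
  induction L with
  | nil => simp [thetaCoeff]
  | cons γ L ih =>
    have h := sub_gcd_mul_rVal n γ.toAdd.val j
    have ih' := ih (by simp [thetaCoeff])
    rw [thetaCoeff] at ih' ⊢
    rw [List.map_cons, List.sum_cons, List.map_cons, List.sum_cons, ← h]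
    push_cast at ih' ⊢
    rw [← ih']
    simp only [List.length_cons]
    push_cast
    ring

lemma dvd_thetaCoeff {n : ℕ} [NeZero n] (L : List (Cyc n)) (hL : L.prod = 1) (j : ℕ) :
    (n : ℤ) ∣ thetaCoeff n L j := by
  have h : (n : ℤ) ∣ thetaCoeff n L j + ((L.map fun γ => γ.toAdd.val).sum : ℕ) * j := by
    clear hL
    induction L with
    | nil => simp [thetaCoeff]
    | cons γ L ih =>
      have h1 : (n : ℤ) ∣ (-((γ.toAdd.val : ℤ) * j)) % n + (γ.toAdd.val : ℤ) * j := by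
        rw [← sub_neg_eq_add]
        exact Int.ModEq.dvd (Int.mod_modEq _ _).symm
      refine (dvd_add h1 ih).trans (dvd_of_eq ?_)
      simp only [thetaCoeff, List.map_cons, List.sum_cons]
      push_cast
      ring
  refine (dvd_add_left (Dvd.dvd.mul_right ?_ _)).1 h
  exact_mod_cast (prod_eq_one_iff_dvd_sum_val L).1 hL

lemma thetaFun_mem_RCa {n : ℕ} [NeZero n] (L : List (Cyc n)) (hL : L.prod = 1) :
    thetaFun n L ∈ RCa (Cyc n) := by
  rw [thetaFun_eq]
  refine sum_mem fun j _ => ?_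
  obtain ⟨c, hc⟩ := dvd_thetaCoeff L hL j
  have hn : (n : ℂ) ≠ 0 := NeZero.ne _
  rw [hc, Int.cast_mul, Int.cast_natCast, mul_div_cancel_left₀ _ hn, Int.cast_smul_eq_zsmul]
  exact zsmul_mem (rho_mem_RCa n j) c

/-- Twice the multiplicity of the regular character of `C_l` in the difference between the
restriction of `thetaFun n L` and `thetaFun l (resList n l L)`. -/
def resDefect (n l : ℕ) (L : List (Cyc n)) : ℤ :=
  (L.map fun γ => ((n / l : ℕ) : ℤ) - (n / l).gcd γ.toAdd.val).sum

lemma even_resDefect {n l : ℕ} [NeZero n] (hl : l ∣ n) (L : List (Cyc n))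
    (hL : L.prod = 1) : Even (resDefect n l L) := by
  have hdvd : n / l ∣ (L.map fun γ => γ.toAdd.val).sum :=
    (Nat.div_dvd_of_dvd hl).trans ((prod_eq_one_iff_dvd_sum_val L).1 hL)
  clear hL
  rcases Nat.even_or_odd (n / l) with hN | hN
  · have h : Even (resDefect n l L) ↔ Even (L.map fun γ => γ.toAdd.val).sum := by
      clear hdvd
      induction L with
      | nil => simp [resDefect]
      | cons γ L ih =>
        have h1 : Even ((n / l).gcd γ.toAdd.val) ↔ Even γ.toAdd.val := by
          simp [even_iff_two_dvd, Nat.dvd_gcd_iff, hN.two_dvd]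
        rw [resDefect] at ih ⊢
        rw [List.map_cons, List.sum_cons, List.map_cons, List.sum_cons, Int.even_add, ih,
          Nat.even_add, Int.even_sub, Int.even_coe_nat, Int.even_coe_nat, h1]
        tauto
    exact h.2 (even_iff_two_dvd.2 (hN.two_dvd.trans hdvd))
  · refine even_iff_two_dvd.2 (List.dvd_sum fun x hx => ?_)
    obtain ⟨γ, _, rfl⟩ := List.mem_map.1 hx
    have h1 : Odd ((n / l).gcd γ.toAdd.val) := hN.of_dvd_nat (Nat.gcd_dvd_left _ _)
    exact even_iff_two_dvd.1 (Odd.sub_odd (by exact_mod_cast hN) (by exact_mod_cast h1))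

lemma two_mul_sum_thetaCoeff {n l : ℕ} [NeZero n] [NeZero l] (hl : l ∣ n) (L : List (Cyc n))
    (j : ℕ) :
    2 * ∑ t ∈ Finset.range (n / l), thetaCoeff n L (j + l * t)
      = (n / l : ℕ) * (2 * thetaCoeff l (resList n l L) j + l * resDefect n l L) := by
  induction L with
  | nil => simp [thetaCoeff, resDefect, resList]
  | cons γ L ih =>
    have hl0 : 0 < l := Nat.pos_of_neZero l
    have hN : 0 < n / l := Nat.div_pos (Nat.le_of_dvd (Nat.pos_of_neZero n) hl) hl0
    have hd : 0 < (n / l).gcd γ.toAdd.val := Nat.gcd_pos_of_pos_left _ hN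
    have hM : 0 < n / l / (n / l).gcd γ.toAdd.val := Nat.div_pos (Nat.gcd_le_left _ hN) hd
    have hsum := two_mul_sum_range_neg_mul_emod l _ _ _ j hl0 hM hd
      (Nat.coprime_div_gcd_div_gcd hd).symm
    rw [Nat.div_mul_cancel (Nat.gcd_dvd_left _ _), Nat.mul_div_cancel' (Nat.gcd_dvd_right _ _),
      Nat.mul_div_cancel' hl] at hsum
    have hres : thetaCoeff l (resList n l (γ :: L)) j
        = (n / l).gcd γ.toAdd.val
            * ((-(((γ.toAdd.val / (n / l).gcd γ.toAdd.val : ℕ) : ℤ) * j)) % l)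
          + thetaCoeff l (resList n l L) j := by
      have hmod : ((resElt n l γ).toAdd.val : ℤ)
          ≡ (γ.toAdd.val / (n / l).gcd γ.toAdd.val : ℕ) [ZMOD l] := by
        rw [resElt, toAdd_ofAdd, ZMod.val_natCast, Int.natCast_mod]
        exact Int.mod_modEq _ _
      have h := (hmod.mul_right j).neg
      rw [← h.eq]
      simp only [thetaCoeff, resList, List.flatMap_cons, List.map_append, List.map_replicate,
        List.sum_append, List.sum_replicate, nsmul_eq_mul]
    have hdef : resDefect n l (γ :: L)
        = ((n / l : ℕ) : ℤ) - (n / l).gcd γ.toAdd.val + resDefect n l L := by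
      simp [resDefect]
    have hcons : ∀ k, thetaCoeff n (γ :: L) k
        = (-((γ.toAdd.val : ℤ) * k)) % n + thetaCoeff n L k := by
      simp [thetaCoeff]
    simp only [hcons]
    rw [Finset.sum_add_distrib, hres, hdef]
    linear_combination hsum + ih

lemma thetaFun_cycIncl {n l : ℕ} [NeZero n] [NeZero l] (hl : l ∣ n) (L : List (Cyc n)) {c : ℤ}
    (hc : resDefect n l L = c + c) :
    (fun y => thetaFun n L (cycIncl n l hl y))
      = thetaFun l (resList n l L) + c • permChar (⊥ : Subgroup (Cyc l)) := by
  have hn : n = l * (n / l) := (Nat.mul_div_cancel' hl).symm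
  have hnC : (n : ℂ) = l * (n / l : ℕ) := by rw [← Nat.cast_mul, ← hn]
  have hn0 : (n : ℂ) ≠ 0 := NeZero.ne _
  have hl0 : (l : ℂ) ≠ 0 := NeZero.ne _
  have hN0 : ((n / l : ℕ) : ℂ) ≠ 0 := right_ne_zero_of_mul (hnC ▸ hn0)
  funext y
  rw [permChar_bot, thetaFun_eq, thetaFun_eq, Finset.smul_sum, ← Finset.sum_add_distrib,
    Finset.sum_apply, Finset.sum_apply]
  simp only [Pi.smul_apply, Pi.add_apply, rho_cycIncl]
  have hsplit := sum_range_mul_eq (fun j => ((thetaCoeff n L j : ℂ) / n) • rho l j y) l (n / l)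
  rw [← hn] at hsplit
  rw [hsplit]
  refine Finset.sum_congr rfl fun j _ => ?_
  simp only [rho_add_mul]
  rw [← Finset.sum_smul, ← Finset.sum_div, ← Int.cast_smul_eq_zsmul ℂ, ← add_smul]
  congr 1
  have h := congrArg (Int.cast (R := ℂ)) (two_mul_sum_thetaCoeff hl L j)
  rw [hc] at h
  push_cast [-Int.natCast_ediv] at h
  rw [div_add' _ _ _ hl0, div_eq_div_iff hn0 hl0, hnC]
  linear_combination l / 2 * h

/-- For `C_l ≤ C_n`, the square formed by `θ` and restriction commutes:
`θ ∘ 𝔹res^{C_n}_{C_l} = Res^{C_n}_{C_l} ∘ θ`. -/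
theorem theta_commutes_with_restriction (n l : ℕ) [NeZero n] [NeZero l] (hl : l ∣ n)
    (θn : BG (Cyc n) →+ RTilde (Cyc n)) (hθn : IsTheta θn)
    (θl : BG (Cyc l) →+ RTilde (Cyc l)) (hθl : IsTheta θl)
    (res : BG (Cyc n) →+ BG (Cyc l)) (hres : IsBresCyc n l hl res)
    (R : RTilde (Cyc n) →+ RTilde (Cyc l)) (hR : IsResQ n l hl R) :
    ∀ α : BG (Cyc n), θl (res α) = R (θn α) := by
  intro α
  obtain ⟨L, hL, rfl⟩ := exists_eq_bmk α
  have hprod := (bdatum_mem_lambdaKer_iff_prod_eq_one L).1 hL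
  have hprod' := prod_resList_eq_one hl L hprod
  have hL' := (bdatum_mem_lambdaKer_iff_prod_eq_one _).2 hprod'
  obtain ⟨c, hc⟩ := even_resDefect hl L hprod
  have hRCa := thetaFun_mem_RCa _ hprod'
  have hperm : permChar (⊥ : Subgroup (Cyc l)) ∈ RCa (Cyc l) := by
    rw [permChar_bot]
    exact sum_mem fun j _ => rho_mem_RCa l j
  rw [hres L hL ⟨_, hL'⟩ (bdatum_resList hl L), hθn L hL ⟨_, thetaFun_mem_RCa L hprod⟩ rfl,
    hR _ ⟨_, add_mem hRCa (zsmul_mem hperm c)⟩ (thetaFun_cycIncl hl L hc).symm]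
  refine (hθl _ hL' ⟨_, hRCa⟩ rfl).trans (QuotientAddGroup.eq.2 ?_)
  rw [AddSubgroup.mem_addSubgroupOf]
  have hEG : permChar (⊥ : Subgroup (Cyc l)) ∈ EG (Cyc l) :=
    AddSubgroup.subset_closure ⟨⊥, rfl⟩
  simpa using zsmul_mem hEG c
end

section
/- Let $p$ be an odd prime, $G=\mathbb{Z}/p\mathbb{Z}\times\mathbb{Z}/p\mathbb{Z}$, and let $G_0,\ldots,G_p$ be the $p+1$ distinct subgroups of $G$ of order $p$, with inclusions $i_j:G_j\to G$. Then the subgroup of $\mathbb{B}_G$ generated by the images $\mathbb{B}_{i_j}(\mathbb{B}_{G_j})$, $j=0,\ldots,p$, has index $p^{p-1}$ in $\mathbb{B}_G$. -/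
open Finsupp

/-- The additive map on formal sums of conjugacy classes induced by a group homomorphism. -/
noncomputable def ccFinsuppMap {H G : Type*} [Group H] [Group G] (f : H →* G) :
    (ConjClasses H →₀ ℤ) →+ (ConjClasses G →₀ ℤ) :=
  Finsupp.mapDomain.addMonoidHom (ConjClasses.map f)

@[simp] lemma ccFinsuppMap_single {H G : Type*} [Group H] [Group G] (f : H →* G)
    (a : H) (k : ℤ) :
    ccFinsuppMap f (Finsupp.single (ConjClasses.mk a) k)
      = Finsupp.single (ConjClasses.mk (f a)) k := by
  simp [ccFinsuppMap, Finsupp.mapDomain_single]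
  rfl

lemma degMap_ccFinsuppMap {H G : Type*} [Group H] [Group G] (f : H →* G)
    (x : ConjClasses H →₀ ℤ) :
    degMap G (ccFinsuppMap f x)
      = MonoidHom.toAdditive (Abelianization.map f) (degMap H x) := by
  have : (degMap G).comp (ccFinsuppMap f)
      = (MonoidHom.toAdditive (Abelianization.map f)).comp (degMap H) := by
    apply Finsupp.addHom_ext
    intro c k
    obtain ⟨a, rfl⟩ := ConjClasses.mk_surjective c
    simp
  exact DFunLike.congr_fun this x

lemma ccFinsuppMap_mem_lambdaKer {H G : Type*} [Group H] [Group G] (f : H →* G)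
    {x : ConjClasses H →₀ ℤ} (hx : x ∈ lambdaKer H) :
    ccFinsuppMap f x ∈ lambdaKer G := by
  have hx' : degMap H x = 0 := hx
  simp [lambdaKer, AddMonoidHom.mem_ker, degMap_ccFinsuppMap, hx']

lemma ccFinsuppMap_bRel_le {H G : Type*} [Group H] [Group G] (f : H →* G) :
    (bRel H).map (ccFinsuppMap f) ≤ bRel G := by
  rw [bRel, AddMonoidHom.map_closure, AddSubgroup.closure_le]
  rintro _ ⟨y, hy, rfl⟩
  rcases hy with h1 | ⟨γ, rfl⟩
  · subst h1
    apply AddSubgroup.subset_closure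
    left
    simp
  · apply AddSubgroup.subset_closure
    right
    exact ⟨f γ, by simp⟩

/-- The functorial homomorphism `𝔹_f : 𝔹_H → 𝔹_G` induced by a group homomorphism
`f : H → G`. -/
noncomputable def BMap {H G : Type*} [Group H] [Group G] (f : H →* G) : BG H →+ BG G :=
  QuotientAddGroup.map _ _
    (((ccFinsuppMap f).comp (lambdaKer H).subtype).codRestrict (lambdaKer G)
      (fun x => ccFinsuppMap_mem_lambdaKer f x.2))
    (by
      intro x hx
      rw [AddSubgroup.mem_addSubgroupOf] at hx
      rw [AddSubgroup.mem_comap, AddSubgroup.mem_addSubgroupOf]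
      exact ccFinsuppMap_bRel_le f (AddSubgroup.mem_map_of_mem _ hx))

namespace SingularOrbitData

section Restriction

variable {G : Type*} [CommGroup G]

open Classical in
/-- The projection of formal sums of elements of `G` onto formal sums of elements of the
subgroup `H`, discarding the elements outside `H`. -/
noncomputable def restrict (H : Subgroup G) : (ConjClasses G →₀ ℤ) →+ (ConjClasses H →₀ ℤ) :=
  Finsupp.liftAddHom (fun c => zmultiplesHom _
    (if h : ConjClasses.mkEquiv.symm c ∈ H then
      Finsupp.single (ConjClasses.mk (⟨ConjClasses.mkEquiv.symm c, h⟩ : H)) 1 else 0))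

lemma restrict_single_of_mem {H : Subgroup G} {a : G} (h : a ∈ H) (k : ℤ) :
    restrict H (Finsupp.single (ConjClasses.mk a) k)
      = Finsupp.single (ConjClasses.mk (⟨a, h⟩ : H)) k := by
  have e : ConjClasses.mkEquiv.symm (ConjClasses.mk a) = a :=
    ConjClasses.mkEquiv.symm_apply_apply a
  simp [restrict, e, h]

lemma restrict_single_of_notMem {H : Subgroup G} {a : G} (h : a ∉ H) (k : ℤ) :
    restrict H (Finsupp.single (ConjClasses.mk a) k) = 0 := by
  have e : ConjClasses.mkEquiv.symm (ConjClasses.mk a) = a :=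
    ConjClasses.mkEquiv.symm_apply_apply a
  simp [restrict, e, h]

lemma degMap_restrict_bRel (H : Subgroup G) {x : ConjClasses G →₀ ℤ} (hx : x ∈ bRel G) :
    degMap H (restrict H x) = 0 := by
  have : bRel G ≤ ((degMap H).comp (restrict H)).ker := by
    rw [bRel, AddSubgroup.closure_le]
    rintro _ (rfl | ⟨a, rfl⟩)
    · have : (⟨1, H.one_mem⟩ : H) = 1 := rfl
      simp [AddMonoidHom.mem_ker, restrict_single_of_mem H.one_mem, this]
    · by_cases ha : a ∈ H
      · have : (⟨a⁻¹, H.inv_mem ha⟩ : H) = ⟨a, ha⟩⁻¹ := rfl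
        simp [AddMonoidHom.mem_ker, restrict_single_of_mem ha,
          restrict_single_of_mem (H.inv_mem ha), this]
      · have ha' : a⁻¹ ∉ H := by simpa using ha
        simp [AddMonoidHom.mem_ker, restrict_single_of_notMem ha,
          restrict_single_of_notMem ha']
  exact this hx

lemma restrict_ccFinsuppMap (H : Subgroup G) (y : ConjClasses H →₀ ℤ) :
    restrict H (ccFinsuppMap H.subtype y) = y := by
  have : (restrict H).comp (ccFinsuppMap H.subtype) = AddMonoidHom.id _ := by
    apply Finsupp.addHom_ext
    intro c k
    obtain ⟨a, rfl⟩ := ConjClasses.mk_surjective c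
    simp [restrict_single_of_mem a.2]
  exact DFunLike.congr_fun this y

lemma degMap_restrict_ccFinsuppMap_of_disjoint {H K : Subgroup G} (hd : Disjoint H K)
    (y : ConjClasses K →₀ ℤ) :
    degMap H (restrict H (ccFinsuppMap K.subtype y)) = 0 := by
  have : ((degMap H).comp (restrict H)).comp (ccFinsuppMap K.subtype) = 0 := by
    apply Finsupp.addHom_ext
    intro c k
    obtain ⟨a, rfl⟩ := ConjClasses.mk_surjective c
    by_cases ha : (a : G) ∈ H
    · have h1 : (⟨a, ha⟩ : H) = 1 := Subtype.ext (Subgroup.disjoint_def.1 hd ha a.2)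
      simp [restrict_single_of_mem ha, h1]
    · simp [restrict_single_of_notMem ha]
  exact DFunLike.congr_fun this y

end Restriction

lemma bRel_le_lambdaKer (G : Type*) [Group G] : bRel G ≤ lambdaKer G := by
  rw [bRel, AddSubgroup.closure_le]
  rintro _ (rfl | ⟨a, rfl⟩) <;> simp [lambdaKer, AddMonoidHom.mem_ker]

lemma degMap_surjective (G : Type*) [Group G] : Function.Surjective (degMap G) := by
  intro t
  obtain ⟨a, ha⟩ := QuotientGroup.mk_surjective t.toMul
  exact ⟨Finsupp.single (ConjClasses.mk a) 1,
    by rw [degMap_single, one_zsmul]; exact congrArg _ ha⟩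

lemma index_lambdaKer (G : Type*) [Group G] :
    (lambdaKer G).index = Nat.card (Abelianization G) := by
  rw [lambdaKer, AddSubgroup.index_ker,
    AddMonoidHom.range_eq_top_of_surjective _ (degMap_surjective G),
    Nat.card_congr AddSubgroup.topEquiv.toEquiv]
  rfl

section Partition

variable {G : Type*} [CommGroup G] {ι : Type*} {H : ι → Subgroup G}

/-- The degrees of the restrictions of a formal sum to each member of a family of subgroups. -/
noncomputable def degrees (H : ι → Subgroup G) :
    (ConjClasses G →₀ ℤ) →+ ∀ j, Additive (Abelianization (H j)) :=
  AddMonoidHom.pi (fun j => (degMap (H j)).comp (restrict (H j)))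

lemma degrees_ccFinsuppMap [DecidableEq ι] (hd : Pairwise fun i j => Disjoint (H i) (H j)) (j : ι)
    (y : ConjClasses (H j) →₀ ℤ) :
    degrees H (ccFinsuppMap (H j).subtype y) = Pi.single j (degMap (H j) y) := by
  ext1 k
  by_cases hk : k = j
  · subst hk
    simp [degrees, restrict_ccFinsuppMap]
  · simp [degrees, Pi.single_eq_of_ne hk, degMap_restrict_ccFinsuppMap_of_disjoint (hd hk)]

variable [Fintype ι]

lemma degrees_surjective (hd : Pairwise fun i j => Disjoint (H i) (H j)) :
    Function.Surjective (degrees H) := by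
  classical
  intro t
  choose y hy using fun j => degMap_surjective (H j) (t j)
  refine ⟨∑ j, ccFinsuppMap (H j).subtype (y j), ?_⟩
  simp only [map_sum, degrees_ccFinsuppMap hd, hy]
  exact Finset.univ_sum_single t

lemma sub_sum_restrict_mem_bRel (hd : Pairwise fun i j => Disjoint (H i) (H j))
    (hcov : ∀ a, ∃ j, a ∈ H j) (x : ConjClasses G →₀ ℤ) :
    x - ∑ j, ccFinsuppMap (H j).subtype (restrict (H j) x) ∈ bRel G := by
  classical
  have hone (k : ℤ) : Finsupp.single (ConjClasses.mk (1 : G)) k ∈ bRel G := by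
    have h1 : Finsupp.single (ConjClasses.mk (1 : G)) (1 : ℤ) ∈ bRel G :=
      AddSubgroup.subset_closure (Set.mem_insert _ _)
    simpa using (bRel G).zsmul_mem h1 k
  induction x using Finsupp.induction_linear with
  | zero => simp
  | add f g hf hg =>
    convert (bRel G).add_mem hf hg using 1
    simp only [map_add, Finset.sum_add_distrib]
    abel
  | single c k =>
    obtain ⟨a, rfl⟩ := ConjClasses.mk_surjective c
    by_cases ha : a = 1
    · subst ha
      refine (bRel G).sub_mem (hone k) ((bRel G).sum_mem fun j _ => ?_)
      simpa [restrict_single_of_mem (H j).one_mem] using hone k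
    · obtain ⟨j, hj⟩ := hcov a
      rw [Finset.sum_eq_single j]
      · simp [restrict_single_of_mem hj]
      · intro i _ hij
        have : a ∉ H i := fun hi => ha (Subgroup.disjoint_def.1 (hd hij) hi hj)
        simp [restrict_single_of_notMem this]
      · simp

lemma ker_degrees_le_lambdaKer (hd : Pairwise fun i j => Disjoint (H i) (H j))
    (hcov : ∀ a, ∃ j, a ∈ H j) : (degrees H).ker ≤ lambdaKer G := by
  intro x hx
  have h := bRel_le_lambdaKer G (sub_sum_restrict_mem_bRel hd hcov x)
  have hs : ∑ j, ccFinsuppMap (H j).subtype (restrict (H j) x) ∈ lambdaKer G :=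
    (lambdaKer G).sum_mem fun j _ =>
      ccFinsuppMap_mem_lambdaKer _ (show degMap (H j) (restrict (H j) x) = 0 from congrFun hx j)
  simpa using (lambdaKer G).add_mem h hs

lemma comap_mk_iSup_range_BMap (hd : Pairwise fun i j => Disjoint (H i) (H j))
    (hcov : ∀ a, ∃ j, a ∈ H j) :
    (⨆ j, (BMap (H j).subtype).range).comap (QuotientAddGroup.mk' _)
      = (degrees H).ker.addSubgroupOf (lambdaKer G) := by
  classical
  apply le_antisymm
  · have hrel : (bRel G).addSubgroupOf (lambdaKer G)
        ≤ (degrees H).ker.addSubgroupOf (lambdaKer G) := fun x hx =>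
      funext fun j => degMap_restrict_bRel (H j) hx
    have hle : (⨆ j, (BMap (H j).subtype).range)
        ≤ ((degrees H).ker.addSubgroupOf (lambdaKer G)).map (QuotientAddGroup.mk' _) := by
      refine iSup_le fun j => ?_
      rintro _ ⟨y, rfl⟩
      obtain ⟨y, rfl⟩ := QuotientAddGroup.mk_surjective y
      refine ⟨⟨ccFinsuppMap (H j).subtype y, ccFinsuppMap_mem_lambdaKer _ y.2⟩, ?_, rfl⟩
      have hy : degMap (H j) y = 0 := y.2
      change degrees H (ccFinsuppMap (H j).subtype y) = 0
      rw [degrees_ccFinsuppMap hd, hy, Pi.single_zero]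
    refine (AddSubgroup.comap_mono hle).trans ?_
    rw [AddSubgroup.comap_map_eq, QuotientAddGroup.ker_mk']
    exact sup_le le_rfl hrel
  · intro x hx
    have hmem (j : ι) : restrict (H j) x ∈ lambdaKer (H j) := congrFun hx j
    have hx' : (QuotientAddGroup.mk x : BG G)
        = ∑ j, BMap (H j).subtype (QuotientAddGroup.mk ⟨restrict (H j) x, hmem j⟩) := by
      have hsum : ∑ j, BMap (H j).subtype (QuotientAddGroup.mk ⟨restrict (H j) x, hmem j⟩)
          = (QuotientAddGroup.mk (∑ j, (⟨ccFinsuppMap (H j).subtype (restrict (H j) x),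
              ccFinsuppMap_mem_lambdaKer _ (hmem j)⟩ : lambdaKer G)) : BG G) :=
        (map_sum (QuotientAddGroup.mk' ((bRel G).addSubgroupOf (lambdaKer G))) _ _).symm
      rw [hsum, QuotientAddGroup.eq_iff_sub_mem, AddSubgroup.mem_addSubgroupOf]
      simpa using sub_sum_restrict_mem_bRel hd hcov (x : ConjClasses G →₀ ℤ)
    change (QuotientAddGroup.mk x : BG G) ∈ ⨆ j, (BMap (H j).subtype).range
    rw [hx']
    exact AddSubgroup.sum_mem _ fun j _ => AddSubgroup.mem_iSup_of_mem j ⟨_, rfl⟩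

/-- If `G` is the union of subgroups `H j` meeting pairwise trivially, then the index of the
subgroup of `𝔹_G` generated by the images of the `𝔹_{H j}` is `∏ |H j| / |G|`. -/
lemma index_iSup_range_BMap_mul_card (hd : Pairwise fun i j => Disjoint (H i) (H j))
    (hcov : ∀ a, ∃ j, a ∈ H j) :
    (⨆ j, (BMap (H j).subtype).range).index * Nat.card G = ∏ j, Nat.card (H j) := by
  have hG : (lambdaKer G).index = Nat.card G :=
    (index_lambdaKer G).trans (Nat.card_congr Abelianization.equivOfComm.toEquiv.symm)
  have hK : (degrees H).ker.index = ∏ j, Nat.card (H j) := by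
    rw [AddSubgroup.index_ker, AddMonoidHom.range_eq_top_of_surjective _ (degrees_surjective hd),
      Nat.card_congr AddSubgroup.topEquiv.toEquiv, Nat.card_pi]
    exact Finset.prod_congr rfl fun j _ =>
      Nat.card_congr (Additive.toMul.trans Abelianization.equivOfComm.toEquiv.symm)
  rw [← AddSubgroup.index_comap_of_surjective _ (QuotientAddGroup.mk'_surjective _),
    comap_mk_iSup_range_BMap hd hcov, ← hG, ← hK]
  exact AddSubgroup.relIndex_mul_index (ker_degrees_le_lambdaKer hd hcov)

end Partition

lemma disjoint_of_card_eq_prime {G : Type*} [Group G] {p : ℕ} (hp : p.Prime) {H K : Subgroup G}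
    (hH : Nat.card H = p) (hK : Nat.card K = p) (hne : H ≠ K) : Disjoint H K := by
  have : Finite H := Nat.finite_of_card_ne_zero (hH ▸ hp.ne_zero)
  have : Finite K := Nat.finite_of_card_ne_zero (hK ▸ hp.ne_zero)
  rw [_root_.disjoint_iff]
  rcases hp.eq_one_or_self_of_dvd _ (hH ▸ Subgroup.card_dvd_of_le (inf_le_left : H ⊓ K ≤ H))
    with h | h
  · exact Subgroup.card_eq_one.1 h
  · refine absurd ?_ hne
    exact (Subgroup.eq_of_le_of_card_ge inf_le_left (by rw [h, hH])).symm.trans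
      (Subgroup.eq_of_le_of_card_ge inf_le_right (by rw [h, hK]))

lemma exists_mem_of_card {G : Type*} [Group G] [Finite G] {ι : Type*} [Fintype ι] [Nonempty ι]
    {H : ι → Subgroup G} (hd : Pairwise fun i j => Disjoint (H i) (H j))
    (hc : Nat.card G = ∑ j, (Nat.card (H j) - 1) + 1) (a : G) : ∃ j, a ∈ H j := by
  by_cases ha : a = 1
  · exact ⟨Classical.arbitrary ι, ha ▸ one_mem _⟩
  let f : (Σ j, {x : H j // x ≠ 1}) → {g : G // g ≠ 1} :=
    fun s => ⟨s.2.1, fun h => s.2.2 (Subtype.ext h)⟩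
  have hf : Function.Injective f := by
    rintro ⟨i, ⟨⟨x, hx⟩, hx1⟩⟩ ⟨j, ⟨⟨y, hy⟩, hy1⟩⟩ h
    obtain rfl : x = y := congrArg Subtype.val h
    obtain rfl : i = j := by
      by_contra hij
      exact hx1 (Subtype.ext (Subgroup.disjoint_def.1 (hd hij) hx hy))
    rfl
  have hcard (K : Type _) [Group K] [Finite K] : Nat.card {x : K // x ≠ 1} = Nat.card K - 1 := by
    classical
    have := Fintype.ofFinite K
    simp [Nat.card_eq_fintype_card, Fintype.card_subtype_compl]
  have hle : Nat.card {g : G // g ≠ 1} ≤ Nat.card (Σ j, {x : H j // x ≠ 1}) := by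
    rw [hcard, Nat.card_sigma, hc]
    simp [hcard]
  obtain ⟨⟨j, x⟩, hx⟩ := (hf.bijective_of_nat_card_le hle).2 ⟨a, ha⟩
  have hxa : (x.1 : G) = a := congrArg Subtype.val hx
  exact ⟨j, hxa ▸ x.1.2⟩

end SingularOrbitData

/-- Let `p` be an odd prime, `G = ℤ/pℤ × ℤ/pℤ`, and `G₀, …, G_p` the
`p+1` distinct subgroups of `G` of order `p`, with inclusions `i_j : G_j → G`. Then the
subgroup of `𝔹_G` generated by the images `𝔹_{i_j}(𝔹_{G_j})` has index `p^(p-1)` in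
`𝔹_G`. -/
theorem index_of_subgroup_generated_by_cyclic_subgroups
    (p : ℕ) (hp : p.Prime) (hodd : Odd p)
    (Gsub : Fin (p + 1) → Subgroup (Multiplicative (ZMod p × ZMod p)))
    (hinj : Function.Injective Gsub)
    (hcard : ∀ j, Nat.card (Gsub j) = p) :
    (⨆ j : Fin (p + 1), (BMap (Gsub j).subtype).range).index = p ^ (p - 1) := by
  have : NeZero p := ⟨hp.ne_zero⟩
  have hG : Nat.card (Multiplicative (ZMod p × ZMod p)) = p * p := by
    rw [Nat.card_congr Multiplicative.toAdd, Nat.card_prod, Nat.card_zmod]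
  have hd : Pairwise fun i j => Disjoint (Gsub i) (Gsub j) := fun i j hij =>
    SingularOrbitData.disjoint_of_card_eq_prime hp (hcard i) (hcard j) (hinj.ne hij)
  have : Finite (Multiplicative (ZMod p × ZMod p)) :=
    inferInstanceAs (Finite (ZMod p × ZMod p))
  have hcov := SingularOrbitData.exists_mem_of_card hd (by
    obtain ⟨m, rfl⟩ := Nat.exists_eq_succ_of_ne_zero hp.ne_zero
    simp only [hG, hcard, Finset.sum_const, Finset.card_univ, Fintype.card_fin, smul_eq_mul,
      Nat.succ_eq_add_one, Nat.add_sub_cancel]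
    ring)
  have h := SingularOrbitData.index_iSup_range_BMap_mul_card hd hcov
  simp only [hG, hcard, Finset.prod_const, Finset.card_univ, Fintype.card_fin] at h
  apply Nat.eq_of_mul_eq_mul_right (Nat.mul_pos hp.pos hp.pos)
  rw [← pow_two, ← pow_add, pow_two]
  rwa [show p - 1 + 2 = p + 1 by have := hp.pos; omega]
end

section
/- Let $p$ be an odd prime and $G=\mathbb{Z}/p\mathbb{Z}\times\mathbb{Z}/p\mathbb{Z}$. Then the group $\mathbb{A}_G$ is isomorphic to $\mathbb{Z}^{(p^2-1)/2}\oplus(\mathbb{Z}/p\mathbb{Z})^k$ for some natural number $k$. -/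
section PermutationCharacters

variable {G : Type*} [CommGroup G]

lemma permChar_apply_of_mem {H : Subgroup G} {g : G} (hg : g ∈ H) :
    permChar H g = (H.index : ℂ) := by
  have h : ∀ x : G ⧸ H, g • x = x := by
    intro x
    induction x using QuotientGroup.induction_on with
    | H z =>
      rw [MulAction.Quotient.smul_coe, QuotientGroup.eq]
      simpa [mul_comm] using hg
  simp only [permChar, h, Subgroup.index]
  rw [Nat.card_congr (Equiv.subtypeUnivEquiv fun _ => trivial)]

lemma permChar_apply_of_notMem {H : Subgroup G} {g : G} (hg : g ∉ H) :
    permChar H g = 0 := by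
  have h : ∀ x : G ⧸ H, ¬ g • x = x := by
    intro x
    induction x using QuotientGroup.induction_on with
    | H z =>
      rw [MulAction.Quotient.smul_coe, QuotientGroup.eq]
      simpa [mul_comm] using hg
  have : IsEmpty {x : G ⧸ H // g • x = x} := ⟨fun x => h x x.2⟩
  simp [permChar]

lemma conjFun_eq_self_of_mem_EG {e : G → ℂ} (he : e ∈ EG G) : conjFun G e = e := by
  have h : EG G ≤ (conjFun G - AddMonoidHom.id (G → ℂ)).ker := by
    rw [EG, AddSubgroup.closure_le]
    rintro _ ⟨H, rfl⟩
    rw [SetLike.mem_coe, AddMonoidHom.mem_ker, AddMonoidHom.sub_apply, sub_eq_zero]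
    funext g
    simp [conjFun, permChar]
  simpa [sub_eq_zero] using h he

/-- Elements of `EG G` take the same value at all generators of a cyclic subgroup. -/
lemma apply_pow_of_mem_EG {p : ℕ} (hexp : ∀ g : G, g ^ p = 1) {e : G → ℂ} (he : e ∈ EG G)
    {k : ℕ} (hk : k.Coprime p) (g : G) : e (g ^ k) = e g := by
  have h : EG G ≤ (Pi.evalAddMonoidHom (fun _ : G => ℂ) (g ^ k) -
      Pi.evalAddMonoidHom (fun _ : G => ℂ) g).ker := by
    rw [EG, AddSubgroup.closure_le]
    rintro _ ⟨H, rfl⟩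
    rw [SetLike.mem_coe, AddMonoidHom.mem_ker, AddMonoidHom.sub_apply, sub_eq_zero]
    simp only [Pi.evalAddMonoidHom_apply]
    have hmem : g ^ k ∈ H ↔ g ∈ H := by
      refine ⟨fun hgk => ?_, fun hg => H.pow_mem hg k⟩
      have hgp : g ^ p ∈ H := by simp [hexp]
      have := Subgroup.mul_mem H (H.zpow_mem hgk (k.gcdA p)) (H.zpow_mem hgp (k.gcdB p))
      rwa [← zpow_natCast, ← zpow_natCast, ← zpow_mul, ← zpow_mul, ← zpow_add,
        ← Nat.gcd_eq_gcd_ab, hk, Nat.cast_one, zpow_one] at this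
    by_cases hg : g ∈ H
    · rw [permChar_apply_of_mem hg, permChar_apply_of_mem (hmem.2 hg)]
    · rw [permChar_apply_of_notMem hg, permChar_apply_of_notMem (mt hmem.1 hg)]
  simpa [sub_eq_zero] using h he

/-- The character induced from the kernel of a nontrivial character `χ` of order `p`
is the sum of the powers of `χ`. -/
lemma permChar_ker_eq_sum_pow {p : ℕ} (hp : p.Prime) (hexp : ∀ g : G, g ^ p = 1)
    {χ : G →* ℂˣ} (hχ : χ ≠ 1) :
    permChar χ.ker = fun g => ∑ j ∈ Finset.range p, ((χ ^ j) g : ℂ) := by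
  have : NeZero p := ⟨hp.ne_zero⟩
  have hle : χ.range ≤ rootsOfUnity p ℂ := by
    rintro _ ⟨g, rfl⟩
    rw [mem_rootsOfUnity, ← map_pow, hexp, map_one]
  have hindex : χ.ker.index = p := by
    rw [Subgroup.index_ker]
    have hdvd := Subgroup.card_dvd_of_le hle
    rw [Complex.card_rootsOfUnity] at hdvd
    refine (hp.eq_one_or_self_of_dvd _ hdvd).resolve_left fun h => hχ ?_
    exact MonoidHom.range_eq_bot_iff.1 (Subgroup.card_eq_one.1 h)
  funext g
  by_cases hg : χ g = 1
  · rw [permChar_apply_of_mem (MonoidHom.mem_ker.2 hg), hindex]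
    simp [hg]
  · rw [permChar_apply_of_notMem (mt MonoidHom.mem_ker.1 hg)]
    have hne : (χ g : ℂ) - 1 ≠ 0 := by
      rw [sub_ne_zero]
      exact fun h => hg (Units.ext h)
    have hpow : (χ g : ℂ) ^ p = 1 := by
      rw [← Units.val_pow_eq_pow_val, ← map_pow, hexp, map_one, Units.val_one]
    simp only [MonoidHom.pow_apply, Units.val_pow_eq_pow_val]
    exact (mul_left_cancel₀ hne (by rw [mul_geom_sum, hpow, sub_self, mul_zero])).symm

lemma one_mem_EG : (fun _ => 1 : G → ℂ) ∈ EG G := by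
  refine AddSubgroup.subset_closure ⟨⊤, funext fun g => ?_⟩
  simp [permChar_apply_of_mem (Subgroup.mem_top g)]

end PermutationCharacters

lemma pow_injective_of_coprime {A : Type*} [CommGroup A] {p k : ℕ} (hexp : ∀ a : A, a ^ p = 1)
    (hk : k.Coprime p) : Function.Injective fun a : A => a ^ k := by
  intro a b hab
  have h1 : (a * b⁻¹) ^ k = 1 := by rw [mul_pow, inv_pow, mul_inv_eq_one]; exact hab
  have := Nat.dvd_gcd (orderOf_dvd_of_pow_eq_one h1) (orderOf_dvd_of_pow_eq_one (hexp _))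
  rw [hk, Nat.dvd_one, orderOf_eq_one_iff] at this
  exact mul_inv_eq_one.1 this

lemma zpowers_eq_zpowers_iff_of_orderOf_prime {A : Type*} [Group A] {p : ℕ} (hp : p.Prime)
    {a b : A} (ha : orderOf a = p) :
    Subgroup.zpowers b = Subgroup.zpowers a ↔ ∃ j, (1 ≤ j ∧ j < p) ∧ a ^ j = b := by
  classical
  have hfin : IsOfFinOrder a := orderOf_pos_iff.1 (ha ▸ hp.pos)
  constructor
  · intro h
    have hb : b ∈ Subgroup.zpowers a := h ▸ Subgroup.mem_zpowers b
    obtain ⟨j, hj, rfl⟩ := Finset.mem_image.1 (hfin.mem_zpowers_iff_mem_range_orderOf.1 hb)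
    rw [Finset.mem_range, ha] at hj
    refine ⟨j, ⟨Nat.one_le_iff_ne_zero.2 ?_, hj⟩, rfl⟩
    rintro rfl
    have : a = 1 := by simpa using h.symm
    exact hp.one_lt.ne (by rw [← ha, this, orderOf_one])
  · rintro ⟨j, ⟨h1, h2⟩, rfl⟩
    have hcop : (orderOf a).Coprime j := by
      rw [ha]
      exact Nat.coprime_of_lt_prime (Nat.one_le_iff_ne_zero.1 h1) h2 hp
    apply le_antisymm
    · simp
    · rw [Subgroup.zpowers_le]
      refine ⟨Nat.gcdB (orderOf a) j, ?_⟩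
      have := Nat.gcd_eq_gcd_ab (orderOf a) j
      rw [hcop, Nat.cast_one] at this
      nth_rw 3 [← zpow_one a]
      rw [this, zpow_add, zpow_mul, zpow_mul, zpow_natCast, zpow_natCast, pow_orderOf_eq_one,
        one_zpow, one_mul]

section VirtualCharacters

variable (G : Type*) [CommGroup G] [Fintype (G →* ℂˣ)]

/-- The virtual character with given multiplicities of the irreducible characters. -/
noncomputable def charSum : ((G →* ℂˣ) → ℤ) →+ (G → ℂ) where
  toFun c := ∑ χ, c χ • fun g => (χ g : ℂ)
  map_zero' := by simp
  map_add' c d := by simp [add_smul, Finset.sum_add_distrib]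

variable {G}

lemma charSum_eq (c : (G →* ℂˣ) → ℤ) :
    charSum G c = ∑ χ, c χ • fun g => (χ g : ℂ) := rfl

lemma charSum_apply (c : (G →* ℂˣ) → ℤ) (g : G) :
    charSum G c g = ∑ χ, (c χ : ℂ) * (χ g : ℂ) := by
  simp [charSum_eq]

lemma charSum_injective : Function.Injective (charSum G) := by
  have hinj : Function.Injective fun χ : G →* ℂˣ => (Units.coeHom ℂ).comp χ := by
    intro χ ψ h
    ext g
    exact DFunLike.congr_fun h g
  have hli := (linearIndependent_monoidHom G ℂ).comp _ hinj
  rw [Fintype.linearIndependent_iff] at hli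
  rw [injective_iff_map_eq_zero]
  intro c hc
  funext χ
  have := hli (fun χ => (c χ : ℂ)) (by
    funext g
    simpa [charSum_apply] using congrFun hc g) χ
  exact_mod_cast this

lemma charSum_range : (charSum G).range = RCa G := by
  classical
  apply le_antisymm
  · rintro _ ⟨c, rfl⟩
    exact sum_mem fun χ _ => zsmul_mem (AddSubgroup.subset_closure (Set.mem_ofPred.2 ⟨χ, rfl⟩)) _
  · rw [RCa, AddSubgroup.closure_le]
    rintro _ ⟨χ, rfl⟩
    refine ⟨Pi.single χ 1, ?_⟩
    rw [charSum_eq, Finset.sum_eq_single χ] <;> simp +contextual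

variable (G) in
/-- The group of virtual characters is free on the irreducible characters. -/
noncomputable def charSumEquiv : ((G →* ℂˣ) → ℤ) ≃+ RCa G :=
  (AddMonoidHom.ofInjective charSum_injective).trans (AddEquiv.addSubgroupCongr charSum_range)

lemma coe_charSumEquiv (c : (G →* ℂˣ) → ℤ) : (charSumEquiv G c : G → ℂ) = charSum G c := rfl

lemma conjFun_charSum (hfin : ∀ g : G, IsOfFinOrder g) (c : (G →* ℂˣ) → ℤ) :
    conjFun G (charSum G c) = charSum G fun χ => c χ⁻¹ := by
  funext g
  change starRingEnd ℂ (charSum G c g) = _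
  rw [charSum_apply, charSum_apply, map_sum]
  refine Fintype.sum_equiv (Equiv.inv _) _ _ fun χ => ?_
  have hχ : starRingEnd ℂ (χ g : ℂ) = (χ g : ℂ)⁻¹ := by
    obtain ⟨n, hn, hgn⟩ := isOfFinOrder_iff_pow_eq_one.1 (hfin g)
    refine (Complex.inv_eq_conj (Complex.norm_eq_one_of_pow_eq_one (n := n) ?_ hn.ne')).symm
    rw [← Units.val_pow_eq_pow_val, ← map_pow, hgn, map_one, Units.val_one]
  simp [hχ]

/-- If a multiplicity function is constant on generators of cyclic groups of characters, then
the virtual character is an integral combination of permutation characters. -/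
lemma charSum_mem_EG {p : ℕ} (hp : p.Prime) (hexp : ∀ g : G, g ^ p = 1) {c : (G →* ℂˣ) → ℤ}
    (hc : ∀ k : ℕ, k.Coprime p → ∀ χ, c (χ ^ k) = c χ) : charSum G c ∈ EG G := by
  classical
  have : Fintype (Subgroup (G →* ℂˣ)) := Fintype.ofFinite _
  rw [charSum_eq, ← Finset.sum_fiberwise _ Subgroup.zpowers]
  refine sum_mem fun K _ => ?_
  by_cases hK : ∃ χ : G →* ℂˣ, Subgroup.zpowers χ = K
  swap
  · rw [Finset.filter_eq_empty_iff.2 fun χ _ h => hK ⟨χ, h⟩, Finset.sum_empty]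
    exact zero_mem _
  obtain ⟨χ, rfl⟩ := hK
  by_cases hχ : χ = 1
  · subst hχ
    have : Finset.univ.filter (fun ψ : G →* ℂˣ => Subgroup.zpowers ψ = Subgroup.zpowers 1) =
        {1} := by
      ext ψ
      simp
    rw [this, Finset.sum_singleton]
    simpa using zsmul_mem one_mem_EG (c 1)
  have horder : orderOf χ = p :=
    orderOf_eq_prime (by ext g; simp [← map_pow, hexp]) hχ (hp := ⟨hp⟩)
  have hfib : Finset.univ.filter (fun ψ : G →* ℂˣ => Subgroup.zpowers ψ = Subgroup.zpowers χ) =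
      (Finset.Ico 1 p).image (χ ^ ·) := by
    ext ψ
    simpa using zpowers_eq_zpowers_iff_of_orderOf_prime hp horder
  rw [hfib, Finset.sum_image]
  swap
  · intro i hi j hj hij
    refine pow_injOn_Iio_orderOf (G := G →* ℂˣ) ?_ ?_ hij
    · simpa [horder] using (Finset.mem_Ico.1 hi).2
    · simpa [horder] using (Finset.mem_Ico.1 hj).2
  have hsum : ∑ j ∈ Finset.Ico 1 p, c (χ ^ j) • (fun g => ((χ ^ j) g : ℂ)) =
      c χ • (permChar χ.ker - fun _ => 1) := by
    rw [permChar_ker_eq_sum_pow hp hexp hχ]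
    have : ∀ j ∈ Finset.Ico 1 p, c (χ ^ j) • (fun g => ((χ ^ j) g : ℂ)) =
        c χ • (fun g => ((χ ^ j) g : ℂ)) := by
      intro j hj
      rw [Finset.mem_Ico] at hj
      rw [hc j (Nat.coprime_of_lt_prime (Nat.one_le_iff_ne_zero.1 hj.1) hj.2 hp).symm]
    rw [Finset.sum_congr rfl this, ← Finset.smul_sum]
    congr 1
    funext g
    rw [Finset.range_eq_Ico, Pi.sub_apply, Finset.sum_eq_sum_Ico_succ_bot hp.pos]
    simp
  rw [hsum]
  exact zsmul_mem (sub_mem (AddSubgroup.subset_closure (Set.mem_ofPred.2 ⟨_, rfl⟩)) one_mem_EG) _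

lemma apply_pow_eq_of_charSum_pow {p : ℕ} (hexp : ∀ g : G, g ^ p = 1) {c : (G →* ℂˣ) → ℤ}
    (h : ∀ k : ℕ, k.Coprime p → ∀ g, charSum G c (g ^ k) = charSum G c g)
    {k : ℕ} (hk : k.Coprime p) (χ : G →* ℂˣ) : c (χ ^ k) = c χ := by
  have hexp' : ∀ χ : G →* ℂˣ, χ ^ p = 1 := fun χ => by ext g; simp [← map_pow, hexp]
  have hinj : Function.Injective fun χ : G →* ℂˣ => χ ^ k := 
    pow_injective_of_coprime (A := G →* ℂˣ) hexp' hk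
  let e : (G →* ℂˣ) ≃ (G →* ℂˣ) := Equiv.ofBijective _ (Finite.injective_iff_bijective.1 hinj)
  have key : charSum G (fun χ => c (e.symm χ)) = charSum G c := by
    funext g
    rw [← h k hk, charSum_apply, charSum_apply]
    refine (Fintype.sum_equiv e _ _ fun χ => ?_).symm
    simp [e]
  have := congrFun (charSum_injective key) (e χ)
  simpa [e] using this.symm

/-- The subgroup `EG G` is saturated for multiplication by `2`. -/
lemma charSum_mem_EG_of_add_self {p : ℕ} (hp : p.Prime) (hexp : ∀ g : G, g ^ p = 1)
    {c : (G →* ℂˣ) → ℤ} (h : charSum G c + charSum G c ∈ EG G) : charSum G c ∈ EG G := by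
  refine charSum_mem_EG hp hexp fun k hk χ => ?_
  refine apply_pow_eq_of_charSum_pow hexp (fun k hk g => ?_) hk χ
  have := apply_pow_of_mem_EG hexp h hk g
  simp only [Pi.add_apply] at this
  linear_combination this / 2

end VirtualCharacters

lemma eq_one_of_inv_eq_self {A : Type*} [CommGroup A] {p : ℕ} (hodd : Odd p)
    (hexp : ∀ a : A, a ^ p = 1) {a : A} (ha : a⁻¹ = a) : a = 1 := by
  refine pow_injective_of_coprime hexp hodd.coprime_two_left ?_
  simp only [one_pow]
  rw [pow_two, mul_eq_one_iff_inv_eq, ha]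

/-- A finite group without elements of order two is, up to the identity, the disjoint union
of a subset of half the size and its inverse. -/
lemma exists_half_set {A : Type*} [Group A] [Finite A] (h : ∀ a : A, a⁻¹ = a → a = 1) :
    ∃ S : Set A, (∀ a, a ≠ 1 → a ∈ S ∨ a⁻¹ ∈ S) ∧ (∀ a ∈ S, a⁻¹ ∉ S) ∧
      Nat.card S = (Nat.card A - 1) / 2 := by
  let e := Finite.equivFin A
  let S : Set A := {a | e a < e a⁻¹}
  have hcover : ∀ a, a ≠ 1 → a ∈ S ∨ a⁻¹ ∈ S := by
    intro a ha
    simp only [S, Set.mem_ofPred_eq, inv_inv]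
    exact lt_or_gt_of_ne fun heq => ha (h a (e.injective heq.symm))
  have hdisj : ∀ a ∈ S, a⁻¹ ∉ S := by
    intro a ha ha'
    simp only [S, Set.mem_ofPred_eq, inv_inv] at ha ha'
    exact lt_asymm ha ha'
  refine ⟨S, hcover, hdisj, ?_⟩
  have hone : (1 : A) ∉ S := fun h1 => hdisj 1 h1 (by simpa using h1)
  have hunion : S ∪ S⁻¹ = {1}ᶜ := by
    ext a
    simp only [Set.mem_union, Set.mem_inv, Set.mem_compl_iff, Set.mem_singleton_iff]
    refine ⟨?_, hcover a⟩
    rintro (ha | ha) rfl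
    · exact hone ha
    · exact hone (by simpa using ha)
  have hcard := Set.ncard_union_eq (s := S) (t := S⁻¹) (Set.disjoint_left.2 fun a ha ha' => hdisj a ha ha')
    S.toFinite S⁻¹.toFinite
  have hcompl := Set.ncard_add_ncard_compl ({1} : Set A)
  rw [hunion, Set.ncard_inv] at hcard
  rw [Set.ncard_singleton] at hcompl
  rw [Nat.card_coe_set_eq]
  omega

section OddFunctions

variable {A : Type*} [Group A]

/-- The differences of the values at `a` and `a⁻¹`, for `a` in a set `S`. -/
def oddPart (S : Set A) : (A → ℤ) →+ (S → ℤ) where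
  toFun c s := c s - c (s : A)⁻¹
  map_zero' := by ext; simp
  map_add' c d := by ext; simp; ring

open Classical in
/-- The extension of a function on `S` to an odd function on the group. -/
noncomputable def oddExtend (S : Set A) : (S → ℤ) →+ (A → ℤ) where
  toFun u a := (if h : a ∈ S then u ⟨a, h⟩ else 0) - (if h : a⁻¹ ∈ S then u ⟨a⁻¹, h⟩ else 0)
  map_zero' := by ext; simp
  map_add' u v := by
    funext a
    simp only [Pi.add_apply]
    split_ifs <;> ring

lemma oddExtend_inv (S : Set A) (u : S → ℤ) (a : A) :
    oddExtend S u a⁻¹ = -oddExtend S u a := by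
  by_cases h : a ∈ S <;> simp [oddExtend, h]

lemma oddPart_oddExtend {S : Set A} (hS : ∀ a ∈ S, a⁻¹ ∉ S) (u : S → ℤ) :
    oddPart S (oddExtend S u) = 2 • u := by
  funext s
  have h : oddExtend S u s = u s := by simp [oddExtend, hS s s.2]
  change oddExtend S u s - oddExtend S u (s : A)⁻¹ = _
  rw [oddExtend_inv, h, Pi.smul_apply]
  ring

end OddFunctions

section ElementaryAbelian

variable {G : Type*} [CommGroup G] [Fintype (G →* ℂˣ)] {p : ℕ}

lemma mk_charSumEquiv_mem_AG_iff (c : (G →* ℂˣ) → ℤ) :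
    (QuotientAddGroup.mk (charSumEquiv G c) : RTilde G) ∈ AG G ↔
      charSum G c + conjFun G (charSum G c) ∈ EG G := by
  rw [mem_AG_iff, conjQ, QuotientAddGroup.map_mk, ← QuotientAddGroup.mk_add,
    QuotientAddGroup.eq_zero_iff, AddSubgroup.mem_addSubgroupOf]
  rfl

lemma oddPart_eq_zero_of_charSum_mem_EG (hfin : ∀ g : G, IsOfFinOrder g) (S : Set (G →* ℂˣ))
    {c : (G →* ℂˣ) → ℤ} (hc : charSum G c ∈ EG G) : oddPart S c = 0 := by
  have h := conjFun_eq_self_of_mem_EG hc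
  rw [conjFun_charSum hfin] at h
  funext s
  simpa [oddPart, sub_eq_zero] using (congrFun (charSum_injective h) s).symm

/-- The map induced by `oddPart` on the quotient by permutation characters. -/
noncomputable def oddPartQ (hfin : ∀ g : G, IsOfFinOrder g) (S : Set (G →* ℂˣ)) :
    RTilde G →+ (S → ℤ) :=
  QuotientAddGroup.lift _ ((oddPart S).comp (charSumEquiv G).symm.toAddMonoidHom) <| by
    intro x hx
    obtain ⟨c, rfl⟩ := (charSumEquiv G).surjective x
    rw [AddSubgroup.mem_addSubgroupOf, coe_charSumEquiv] at hx
    simpa using oddPart_eq_zero_of_charSum_mem_EG hfin S hx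

lemma oddPartQ_mk (hfin : ∀ g : G, IsOfFinOrder g) (S : Set (G →* ℂˣ)) (c : (G →* ℂˣ) → ℤ) :
    oddPartQ hfin S (QuotientAddGroup.mk (charSumEquiv G c)) = oddPart S c := by
  simp [oddPartQ]

lemma oddPartQ_injective_on_AG (hp : p.Prime) (hexp : ∀ g : G, g ^ p = 1)
    (hfin : ∀ g : G, IsOfFinOrder g) {S : Set (G →* ℂˣ)} (hS : ∀ χ, χ ≠ 1 → χ ∈ S ∨ χ⁻¹ ∈ S) :
    Function.Injective ((oddPartQ hfin S).comp (AG G).subtype) := by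
  rw [injective_iff_map_eq_zero]
  rintro ⟨a, ha⟩ h
  obtain ⟨x, rfl⟩ := QuotientAddGroup.mk_surjective a
  obtain ⟨c, rfl⟩ := (charSumEquiv G).surjective x
  rw [mk_charSumEquiv_mem_AG_iff] at ha
  simp only [AddMonoidHom.comp_apply, AddSubgroup.subtype_apply, oddPartQ_mk] at h
  have hsymm : (fun χ => c χ⁻¹) = c := by
    funext χ
    by_cases hχ : χ = 1
    · rw [hχ]
      exact congrArg c (inv_one (G := G →* ℂˣ))
    rcases hS χ hχ with hmem | hmem
    · exact (sub_eq_zero.1 (congrFun h ⟨χ, hmem⟩)).symm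
    · exact (sub_eq_zero.1 (congrFun h ⟨χ⁻¹, hmem⟩)).trans
        (congrArg c (inv_inv (G := G →* ℂˣ) χ))
  rw [conjFun_charSum hfin, hsymm] at ha
  refine Subtype.ext ?_
  rw [AddSubgroup.coe_zero, QuotientAddGroup.eq_zero_iff, AddSubgroup.mem_addSubgroupOf]
  exact charSum_mem_EG_of_add_self hp hexp ha

/-- The class in `AG G` of the odd virtual character with prescribed multiplicities on `S`. -/
noncomputable def oddClass (hfin : ∀ g : G, IsOfFinOrder g) (S : Set (G →* ℂˣ)) :
    (S → ℤ) →+ AG G :=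
  (((QuotientAddGroup.mk' _).comp (charSumEquiv G).toAddMonoidHom).comp (oddExtend S)).codRestrict
    (AG G) <| by
    intro u
    refine (mk_charSumEquiv_mem_AG_iff _).2 ?_
    rw [conjFun_charSum hfin, ← map_add]
    have : (oddExtend S u + fun χ => oddExtend S u χ⁻¹) = 0 := by
      funext χ
      exact (congrArg _ (oddExtend_inv S u χ)).trans (add_neg_cancel _)
    rw [this, map_zero]
    exact zero_mem _

lemma oddClass_injective (hfin : ∀ g : G, IsOfFinOrder g) {S : Set (G →* ℂˣ)}
    (hS : ∀ χ ∈ S, χ⁻¹ ∉ S) : Function.Injective (oddClass hfin S) := by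
  rw [injective_iff_map_eq_zero]
  intro u hu
  have h : oddPartQ hfin S (oddClass hfin S u) = 2 • u :=
    (oddPartQ_mk hfin S _).trans (oddPart_oddExtend hS u)
  rw [hu, AddSubgroup.coe_zero, map_zero] at h
  funext s
  have := congrFun h s
  simpa using this.symm

end ElementaryAbelian

/-- For an elementary abelian `p`-group `G` with `p` odd, the group `AG G` is free abelian of
rank `(|G| - 1) / 2`. -/
lemma nonempty_AG_addEquiv {G : Type*} [CommGroup G] [Finite G] {p : ℕ} (hp : p.Prime)
    (hodd : Odd p) (hexp : ∀ g : G, g ^ p = 1) :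
    Nonempty (AG G ≃+ (Fin ((Nat.card G - 1) / 2) → ℤ)) := by
  have : Fintype (G →* ℂˣ) := Fintype.ofFinite _
  have hfin : ∀ g : G, IsOfFinOrder g := isOfFinOrder_of_finite
  have hexp' : ∀ χ : G →* ℂˣ, χ ^ p = 1 := fun χ => by ext g; simp [← map_pow, hexp]
  obtain ⟨S, hcover, hdisj, hcard⟩ := exists_half_set (A := G →* ℂˣ)
    fun χ => eq_one_of_inv_eq_self hodd hexp'
  rw [CommGroup.card_monoidHom_of_hasEnoughRootsOfUnity] at hcard
  let T := ((oddPartQ hfin S).comp (AG G).subtype).toIntLinearMap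
  let U := (oddClass hfin S).toIntLinearMap
  have hT : Function.Injective T := oddPartQ_injective_on_AG hp hexp hfin hcover
  have hU : Function.Injective U := oddClass_injective hfin hdisj
  have : Fintype S := Fintype.ofFinite _
  have : Module.Finite ℤ (AG G) := Module.Finite.of_injective T hT
  have : Module.IsTorsionFree ℤ (AG G) := hT.moduleIsTorsionFree T (map_smul T)
  have hrank : Module.finrank ℤ (AG G) = (Nat.card G - 1) / 2 := by
    rw [← hcard, Nat.card_eq_fintype_card, ← Module.finrank_fintype_fun_eq_card ℤ]
    exact le_antisymm (LinearMap.finrank_le_finrank_of_injective hT)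
      (LinearMap.finrank_le_finrank_of_injective hU)
  exact ⟨(Module.finBasisOfFinrankEq ℤ (AG G) hrank).equivFun.toAddEquiv⟩

/-- For an odd prime `p` and `G = ℤ/pℤ × ℤ/pℤ`, the group `𝔸_G` is
isomorphic to `ℤ^((p²-1)/2) ⊕ (ℤ/pℤ)^k` for some natural number `k`. -/
theorem AG_CpCp_iso (p : ℕ) (hp : p.Prime) (hodd : Odd p) :
    ∃ k : ℕ, Nonempty
      ((AG (Multiplicative (ZMod p × ZMod p)))
        ≃+ ((Fin ((p ^ 2 - 1) / 2) → ℤ) × (Fin k → ZMod p))) := by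
  have : NeZero p := ⟨hp.ne_zero⟩
  have : Finite (Multiplicative (ZMod p × ZMod p)) :=
    inferInstanceAs (Finite (ZMod p × ZMod p))
  have hcard : Nat.card (Multiplicative (ZMod p × ZMod p)) = p ^ 2 := by
    simp [pow_two]
  have hexp : ∀ g : Multiplicative (ZMod p × ZMod p), g ^ p = 1 := by
    intro g
    apply Multiplicative.toAdd.injective
    rw [toAdd_pow, toAdd_one]
    ext <;> simp
  obtain ⟨e⟩ := nonempty_AG_addEquiv hp hodd hexp
  rw [hcard] at e
  exact ⟨0, ⟨e.trans AddEquiv.prodUnique.symm⟩⟩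
end
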